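/- arXiv:1802.05700 — 4 statements merged into one kernel-verified Lean document; each statement's English description precedes it below -/
import Mathlib

section
/- (Injectivity criterion) Let X and Y be real Banach spaces, let f : X → Y be a local C¹-diffeomorphism, and let h : [0,∞) → [0,∞) be a continuous nondecreasing function with ∫₀^∞ dρ/(1+h(ρ)) = ∞. Suppose that for each y ∈ Y there is no sequence {x_n} in X such that F_y(x_n) → c for some c > 0 and λ_{F_y}(x_n)(1+h(‖x_n‖)) → 0, where F_y(x) = ½‖f(x) − y‖². Then f is injective. -/
/-!
The proof is a mountain pass argument. If `f x₁ = f x₂ = y` with `x₁ ≠ x₂`, the functional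
`F = ½‖f - y‖²` vanishes at both points, and, `df(x₁)` being an isomorphism, it is bounded below by
a positive constant on a small sphere around `x₁` (`exists_sphere_barrier`). Hence the minimax level
`c` of `F` over the paths from `x₁` to `x₂` is positive. The hypothesis on `F`, read at the level
`c`, gives `ε > 0` with `λ_F(x) (1 + h ‖x‖) ≥ ε` whenever `|F x - c| < ε` (`exists_uniform_slope`).

Since `F = G ∘ f` with `G` convex, a point `x` with `λ_F(x) > μ` admits a unit direction along which
`F` decreases at rate `μ`, uniformly for nearby base points and directions (`exists_descentDir`).
Otherwise the convex function `v ↦ G (f x + df(x) v)` would lie above `G (f x) - μ ‖v‖`, and a linear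
functional squeezed between the two (`sandwich`) would be a Clarke subgradient of norm at most `μ`.
The admissible directions at `x` form a convex set, and each of them stays admissible near `x`, so
they can be selected continuously along a path `γ`. Moving `γ` along this selection lowers `max F ∘ γ` at a rate of at
least `ε / 2 / (1 + h ‖γ‖)` per unit of sup-distance (`exists_descent_path`); here `h` nondecreasing
is what allows `‖γ(τ)‖` to be replaced by `‖γ‖`.

Such a descent at every path of level close to `c` is impossible in the complete space of paths
(`no_uniform_descent`, a weighted form of Ekeland's principle): a sequence of almost optimal descents
stays bounded because `∫ dρ / (1 + h ρ)` diverges, hence it converges, and its limit cannot be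
descended from.
-/

open Filter Topology Set

noncomputable section

/-- Clarke generalized directional derivative of `F` at `x` in direction `v`. -/
def clarkeDeriv {X : Type*} [NormedAddCommGroup X] [NormedSpace ℝ X]
    (F : X → ℝ) (x v : X) : ℝ :=
  Filter.limsup (fun p : X × ℝ => (F (x + p.1 + p.2 • v) - F (x + p.1)) / p.2)
    ((nhds (0 : X)) ×ˢ (nhdsWithin (0 : ℝ) (Set.Ioi 0)))

/-- Clarke generalized gradient of `F` at `x`. -/
def clarkeSubdiff {X : Type*} [NormedAddCommGroup X] [NormedSpace ℝ X]
    (F : X → ℝ) (x : X) : Set (X →L[ℝ] ℝ) :=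
  {w | ∀ v, w v ≤ clarkeDeriv F x v}

/-- `λ_F(x) = min_{w* ∈ ∂F(x)} ‖w*‖`. -/
def lambdaF {X : Type*} [NormedAddCommGroup X] [NormedSpace ℝ X]
    (F : X → ℝ) (x : X) : ℝ :=
  sInf ((fun w : X →L[ℝ] ℝ => ‖w‖) '' clarkeSubdiff F x)

/-- The weighted Chang Palais–Smale condition for the weight `h`. -/
def WeightedChangPS {X : Type*} [NormedAddCommGroup X] [NormedSpace ℝ X]
    (F : X → ℝ) (h : ℝ → ℝ) : Prop :=
  ∀ x : ℕ → X, (∃ C : ℝ, ∀ n, |F (x n)| ≤ C) →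
    Filter.Tendsto (fun n => lambdaF F (x n) * (1 + h ‖x n‖)) Filter.atTop (nhds 0) →
    ∃ (z : X) (φ : ℕ → ℕ), StrictMono φ ∧
      Filter.Tendsto (fun n => x (φ n)) Filter.atTop (nhds z)

/-- The Banach constant `Sur A = inf_{‖v*‖=1} ‖A* v*‖`. -/
def surBanach {X Y : Type*} [NormedAddCommGroup X] [NormedSpace ℝ X]
    [NormedAddCommGroup Y] [NormedSpace ℝ Y] (A : X →L[ℝ] Y) : ℝ :=
  sInf ((fun v : Y →L[ℝ] ℝ => ‖v.comp A‖) '' {v : Y →L[ℝ] ℝ | ‖v‖ = 1})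

/-- Norm-coercivity: `‖f x‖ → ∞` as `‖x‖ → ∞`. -/
def NormCoercive {X Y : Type*} [NormedAddCommGroup X] [NormedAddCommGroup Y]
    (f : X → Y) : Prop :=
  Filter.Tendsto (fun x => ‖f x‖) (Filter.comap (fun x : X => ‖x‖) Filter.atTop) Filter.atTop

section

variable {X Y : Type*} [NormedAddCommGroup X] [NormedSpace ℝ X]
  [NormedAddCommGroup Y] [NormedSpace ℝ Y]

/-! ### Convex subgradients are Clarke subgradients -/

/-- A sandwich theorem: a convex continuous `φ` lying above the cone `v ↦ φ 0 - μ ‖v‖` has a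
subgradient at `0` of norm at most `μ`. It comes from separating the strict epigraph of `φ - φ 0`
from the hypograph of `-μ ‖·‖`. -/
theorem sandwich (φ : X → ℝ) (hφ : ConvexOn ℝ univ φ) (hc : Continuous φ) (μ : ℝ) (hμ : 0 ≤ μ)
    (hle : ∀ v, φ 0 - μ * ‖v‖ ≤ φ v) :
    ∃ w : X →L[ℝ] ℝ, ‖w‖ ≤ μ ∧ ∀ v, w v ≤ φ v - φ 0 := by
  have h1 : Convex ℝ {p : X × ℝ | p.1 ∈ univ ∧ φ p.1 < p.2 + φ 0} := by
    have := (hφ.add_const (-φ 0)).convex_strict_epigraph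
    convert this using 3
    simp only [Pi.add_apply]
    constructor <;> rintro ⟨a, b⟩ <;> exact ⟨a, by linarith⟩
  have h1o : IsOpen {p : X × ℝ | p.1 ∈ univ ∧ φ p.1 < p.2 + φ 0} := by
    simp only [mem_univ, true_and]
    exact isOpen_lt (by fun_prop) (by fun_prop)
  have h2 : Convex ℝ {p : X × ℝ | p.1 ∈ univ ∧ p.2 ≤ -(μ * ‖p.1‖)} := by
    have := (((convexOn_norm (E := X) convex_univ).smul hμ).neg).convex_hypograph
    simpa using this
  obtain ⟨L, u, hL1, hL2⟩ := geometric_hahn_banach_open h1 h1o h2 (by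
    rw [Set.disjoint_left]
    rintro ⟨v, r⟩ ⟨-, hr⟩ ⟨-, hr'⟩
    have := hle v
    simp only at hr hr'
    linarith)
  have hdec : ∀ v r, L (v, r) = L (v, 0) + r * L (0, 1) := by
    intro v r
    rw [← smul_eq_mul, ← map_smul, ← map_add]
    simp
  set k := L (0, 1) with hk
  have hu0 : u ≤ 0 := by
    have := hL2 (0, 0) (by simp)
    rwa [Prod.mk_zero_zero, map_zero] at this
  have hr : ∀ r > 0, r * k < u := by
    intro r hr
    have := hL1 (0, r) (by simpa using hr)
    rw [hdec, Prod.mk_zero_zero, map_zero, zero_add] at this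
    exact this
  have hk0 : k < 0 := by have := hr 1 one_pos; linarith
  have hu : u = 0 := by
    refine le_antisymm hu0 ?_
    by_contra! hlt
    have h3 := hr (u / k) (div_pos_of_neg_of_neg hlt hk0)
    rw [div_mul_cancel₀ _ hk0.ne] at h3
    exact lt_irrefl _ h3
  subst hu
  let w : X →L[ℝ] ℝ := (-k)⁻¹ • L.comp (ContinuousLinearMap.inl ℝ X ℝ)
  have hw : ∀ v, w v = L (v, 0) / (-k) := by
    intro v
    simp [w, div_eq_inv_mul]
  have hnk : 0 < -k := by linarith
  have hlow : ∀ v, -(μ * ‖v‖) ≤ w v := by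
    intro v
    have := hL2 (v, -(μ * ‖v‖)) (by simp)
    rw [hdec] at this
    rw [hw, le_div_iff₀ hnk]
    linarith
  refine ⟨w, ?_, ?_⟩
  · refine w.opNorm_le_bound hμ fun v => ?_
    rw [Real.norm_eq_abs, abs_le]
    refine ⟨hlow v, ?_⟩
    have := hlow (-v)
    rw [map_neg, norm_neg] at this
    linarith
  · intro v
    refine le_of_forall_gt_imp_ge_of_dense fun r hr => ?_
    have := hL1 (v, r) ⟨mem_univ _, by simp only; linarith⟩
    rw [hdec] at this
    rw [hw, div_le_iff₀ hnk]
    linarith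

/-- Strict differentiability as a limit of difference quotients with moving base point and moving
direction. -/
theorem tendsto_strict_quotient {f : X → Y} {A : X →L[ℝ] Y} {x : X}
    (hf : HasStrictFDerivAt f A x) (v : X) :
    Tendsto (fun p : X × X × ℝ => p.2.2⁻¹ • (f (p.1 + p.2.2 • p.2.1) - f p.1))
      (𝓝 x ×ˢ 𝓝 v ×ˢ 𝓝[>] (0 : ℝ)) (𝓝 (A v)) := by
  set l : Filter (X × X × ℝ) := 𝓝 x ×ˢ 𝓝 v ×ˢ 𝓝[>] (0 : ℝ) with hl
  have e1 : Tendsto (fun p : X × X × ℝ => p.1) l (𝓝 x) := tendsto_fst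
  have e2 : Tendsto (fun p : X × X × ℝ => p.2.1) l (𝓝 v) := tendsto_fst.comp tendsto_snd
  have e3 : Tendsto (fun p : X × X × ℝ => p.2.2) l (𝓝[>] 0) := tendsto_snd.comp tendsto_snd
  have e3' : Tendsto (fun p : X × X × ℝ => p.2.2) l (𝓝 0) := e3.mono_right nhdsWithin_le_nhds
  have hpos : ∀ᶠ p in l, 0 < p.2.2 := e3.eventually self_mem_nhdsWithin
  have e4 : Tendsto (fun p : X × X × ℝ => p.1 + p.2.2 • p.2.1) l (𝓝 x) := by
    simpa using e1.add (e3'.smul e2)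
  have ho := hf.isLittleO.comp_tendsto (e4.prodMk_nhds e1)
  have ho2 : (fun p : X × X × ℝ => p.2.2⁻¹ • (f (p.1 + p.2.2 • p.2.1) - f p.1) - A p.2.1)
      =o[l] (fun p => p.2.1) := by
    have := (Asymptotics.isBigO_refl (fun p : X × X × ℝ => p.2.2⁻¹) l).smul_isLittleO ho
    refine this.congr' ?_ ?_
    · filter_upwards [hpos] with p hp
      simp only [Function.comp, add_sub_cancel_left, map_smul, smul_sub, smul_smul,
        inv_mul_cancel₀ hp.ne', one_smul]
    · filter_upwards [hpos] with p hp
      simp only [Function.comp, add_sub_cancel_left, smul_smul, inv_mul_cancel₀ hp.ne', one_smul]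
  have h0 := (Asymptotics.isLittleO_one_iff ℝ).1 (ho2.trans_isBigO (e2.isBigO_one ℝ))
  have := h0.add ((A.continuous.tendsto v).comp e2)
  simpa using this

/-- Convexity of `G` bounds a difference quotient of `G ∘ f` by an increment of `G` over a full
difference quotient of `f`, a quantity with a limit as `t` tends to `0`. -/
theorem quotient_le {f : X → Y} {G : Y → ℝ} (hG : ConvexOn ℝ univ G) (x v : X) {t : ℝ}
    (ht : 0 < t) (ht1 : t ≤ 1) :
    G (f (x + t • v)) - G (f x) ≤ t * (G (f x + t⁻¹ • (f (x + t • v) - f x)) - G (f x)) := by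
  have := hG.2 (mem_univ (f x)) (mem_univ (f x + t⁻¹ • (f (x + t • v) - f x)))
    (sub_nonneg.2 ht1) ht.le (by ring)
  have h2 : (1 - t) • f x + t • (f x + t⁻¹ • (f (x + t • v) - f x)) = f (x + t • v) := by
    rw [smul_add, smul_smul, mul_inv_cancel₀ ht.ne', one_smul]
    module
  rw [h2] at this
  simp only [smul_eq_mul] at this
  linarith

/-- The upper bound of the difference quotient of `G ∘ f` given by `quotient_le` converges as the
base point, the direction and the step size vary. -/
theorem tendsto_convex_quotient {f : X → Y} {A : X →L[ℝ] Y} {x : X}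
    (hf : HasStrictFDerivAt f A x) {G : Y → ℝ} (hGc : Continuous G) (v : X) :
    Tendsto (fun p : X × X × ℝ =>
        G (f p.1 + p.2.2⁻¹ • (f (p.1 + p.2.2 • p.2.1) - f p.1)) - G (f p.1))
      (𝓝 x ×ˢ 𝓝 v ×ˢ 𝓝[>] (0 : ℝ)) (𝓝 (G (f x + A v) - G (f x))) := by
  have e1 : Tendsto (fun p : X × X × ℝ => f p.1) (𝓝 x ×ˢ 𝓝 v ×ˢ 𝓝[>] (0 : ℝ)) (𝓝 (f x)) :=
    hf.hasFDerivAt.continuousAt.tendsto.comp tendsto_fst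
  exact ((hGc.tendsto _).comp (e1.add (tendsto_strict_quotient hf v))).sub
    ((hGc.tendsto _).comp e1)

/-- A subgradient at `0` of the convex function `v ↦ G (f x + A v)` is a Clarke subgradient of
`G ∘ f` at `x`. -/
theorem mem_clarkeSubdiff {f : X → Y} {A : X ≃L[ℝ] Y} {x : X}
    (hf : HasStrictFDerivAt f (A : X →L[ℝ] Y) x) {G : Y → ℝ} (hG : ConvexOn ℝ univ G)
    (hGc : Continuous G) (w : X →L[ℝ] ℝ) (hw : ∀ v, w v ≤ G (f x + A v) - G (f x)) :
    w ∈ clarkeSubdiff (fun u => G (f u)) x := by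
  intro v
  rw [clarkeDeriv, Filter.limsup_eq]
  have hmap : Tendsto (fun p : X × ℝ => (x + p.1, v, p.2)) (𝓝 (0 : X) ×ˢ 𝓝[>] (0 : ℝ))
      (𝓝 x ×ˢ 𝓝 v ×ˢ 𝓝[>] (0 : ℝ)) := by
    refine Tendsto.prodMk ?_ (Tendsto.prodMk tendsto_const_nhds tendsto_snd)
    have : Tendsto (fun p : X × ℝ => x + p.1) (𝓝 (0 : X) ×ˢ 𝓝[>] (0 : ℝ)) (𝓝 (x + 0)) :=
      tendsto_const_nhds.add tendsto_fst
    simpa using this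
  have hsmall : ∀ᶠ t in 𝓝[>] (0 : ℝ), 0 < t ∧ t ≤ 1 := by
    filter_upwards [Ioc_mem_nhdsGT (zero_lt_one (α := ℝ))] with t ht using ht
  refine le_csInf ?_ ?_
  · refine ⟨G (f x + A v) - G (f x) + 1, ?_⟩
    have h1 := ((tendsto_convex_quotient hf hGc v).comp hmap).eventually
      (gt_mem_nhds (lt_add_one _))
    filter_upwards [h1, tendsto_snd.eventually hsmall] with p hp hp2
    rw [div_le_iff₀ hp2.1]
    have := quotient_le (f := f) hG (x + p.1) v hp2.1 hp2.2
    simp only [Function.comp, ContinuousLinearEquiv.coe_coe] at hp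
    nlinarith [hp2.1]
  -- With base point fixed at `x`, the quotients dominate `w (A⁻¹ q)`, where the difference quotient
  -- `q` of `f` tends to `A v`.
  · intro a ha
    have hmap0 : Tendsto (fun t : ℝ => ((0 : X), t)) (𝓝[>] (0 : ℝ))
        (𝓝 (0 : X) ×ˢ 𝓝[>] (0 : ℝ)) := tendsto_const_nhds.prodMk tendsto_id
    have ha' := hmap0.eventually ha
    have hq := (tendsto_strict_quotient hf v).comp (hmap.comp hmap0)
    have hq2 := ((w.continuous.comp A.symm.continuous).tendsto (A v)).comp hq
    simp only [Function.comp, ContinuousLinearEquiv.symm_apply_apply] at hq2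
    refine le_of_tendsto hq2 ?_
    filter_upwards [ha', hsmall] with t ht ht1
    refine le_trans ?_ ht
    have h3 := hw (A.symm (f (x + 0 + t • v) - f (x + 0)))
    rw [le_div_iff₀ ht1.1, mul_comm]
    change t * w (A.symm (t⁻¹ • (f (x + 0 + t • v) - f (x + 0)))) ≤ _
    rw [map_smul, map_smul, smul_eq_mul, mul_inv_cancel_left₀ ht1.1.ne']
    simpa using h3

/-! ### Directions of descent -/

/-- The directions `v` of uniform descent of `F` at rate `μ` near `x`: the inequality
`F (x' + t v') ≤ F x' - t μ` holds for all `x'` near `x`, all `v'` near `v` and all small `t > 0`. The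
direction may vary so that the notion can be used along a continuous field of directions. -/
def descentDirs (F : X → ℝ) (μ : ℝ) (x : X) : Set X :=
  {v | ∀ᶠ p : X × X × ℝ in 𝓝 x ×ˢ 𝓝 v ×ˢ 𝓝[>] (0 : ℝ),
    F (p.1 + p.2.2 • p.2.1) ≤ F p.1 - p.2.2 * μ}

theorem eventually_mem_descentDirs {F : X → ℝ} {μ : ℝ} {x v : X} (hv : v ∈ descentDirs F μ x) :
    ∀ᶠ x' in 𝓝 x, v ∈ descentDirs F μ x' := by
  obtain ⟨s, hs, t, ht, hst⟩ := Filter.mem_prod_iff.1 hv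
  filter_upwards [eventually_eventually_nhds.2 hs] with x' hx'
  exact Filter.mem_of_superset (Filter.prod_mem_prod hx' ht) hst

/-- Moving along `α • a + β • b` is moving along `α • a` and then along `β • b`; the intermediate
point is still close to `x`, so both descents apply. -/
theorem convex_descentDirs (F : X → ℝ) (μ : ℝ) (x : X) : Convex ℝ (descentDirs F μ x) := by
  rw [convex_iff_forall_pos]
  intro a ha b hb α β hα hβ hαβ
  set v := α • a + β • b with hv
  have e1 : Tendsto (fun p : X × X × ℝ => p.1) (𝓝 x ×ˢ 𝓝 v ×ˢ 𝓝[>] (0 : ℝ)) (𝓝 x) := tendsto_fst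
  have e2 : Tendsto (fun p : X × X × ℝ => p.2.1) (𝓝 x ×ˢ 𝓝 v ×ˢ 𝓝[>] (0 : ℝ)) (𝓝 v) :=
    tendsto_fst.comp tendsto_snd
  have e3 : Tendsto (fun p : X × X × ℝ => p.2.2) (𝓝 x ×ˢ 𝓝 v ×ˢ 𝓝[>] (0 : ℝ)) (𝓝[>] 0) :=
    tendsto_snd.comp tendsto_snd
  have e3' := e3.mono_right nhdsWithin_le_nhds
  have hpos := e3.eventually self_mem_nhdsWithin
  have hsc : ∀ α : ℝ, 0 < α → Tendsto (fun p : X × X × ℝ => α * p.2.2)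
      (𝓝 x ×ˢ 𝓝 v ×ˢ 𝓝[>] (0 : ℝ)) (𝓝[>] 0) := by
    intro α hα
    refine tendsto_nhdsWithin_iff.2 ⟨by simpa using e3'.const_mul α, ?_⟩
    filter_upwards [hpos] with p hp using mul_pos hα hp
  have hsh : ∀ a : X, Tendsto (fun p : X × X × ℝ => a + (p.2.1 - v))
      (𝓝 x ×ˢ 𝓝 v ×ˢ 𝓝[>] (0 : ℝ)) (𝓝 a) := by
    intro a
    simpa using (tendsto_const_nhds (x := a)).add (e2.sub (tendsto_const_nhds (x := v)))
  have hmid : Tendsto (fun p : X × X × ℝ => p.1 + (α * p.2.2) • (a + (p.2.1 - v)))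
      (𝓝 x ×ˢ 𝓝 v ×ˢ 𝓝[>] (0 : ℝ)) (𝓝 x) := by
    simpa using e1.add (((hsc α hα).mono_right nhdsWithin_le_nhds).smul (hsh a))
  have h1 := (e1.prodMk ((hsh a).prodMk (hsc α hα))).eventually ha
  have h2 := (hmid.prodMk ((hsh b).prodMk (hsc β hβ))).eventually hb
  rw [descentDirs, mem_ofPred_eq]
  filter_upwards [h1, h2] with p hp1 hp2
  have key : p.1 + (α * p.2.2) • (a + (p.2.1 - v)) + (β * p.2.2) • (b + (p.2.1 - v))
      = p.1 + p.2.2 • p.2.1 := by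
    have hβ' : β = 1 - α := by linarith
    rw [hv, hβ']
    module
  rw [key] at hp2
  have : p.2.2 * μ = α * p.2.2 * μ + β * p.2.2 * μ := by
    rw [← add_mul, ← add_mul, hαβ, one_mul]
  linarith

/-- If all Clarke subgradients of `G ∘ f` at `x` have norm larger than `μ`, in the sense
`μ < lambdaF`, then some vector of norm at most one is a direction of descent at rate `μ`. -/
theorem exists_descentDir {f : X → Y} {A : X ≃L[ℝ] Y} {x : X}
    (hf : HasStrictFDerivAt f (A : X →L[ℝ] Y) x) {G : Y → ℝ} (hG : ConvexOn ℝ univ G)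
    (hGc : Continuous G) {μ : ℝ} (hμ : 0 ≤ μ) (hlam : μ < lambdaF (fun u => G (f u)) x) :
    ∃ v ∈ descentDirs (fun u => G (f u)) μ x, ‖v‖ ≤ 1 := by
  have hex : ∃ v, G (f x + A v) < G (f x) - μ * ‖v‖ := by
    by_contra! hcon
    obtain ⟨w, hwn, hw⟩ := sandwich (fun v => G (f x + A v))
      (by simpa [Function.comp_def] using
        (hG.translate_right (f x)).comp_linearMap (A : X →ₗ[ℝ] Y))
      (by fun_prop) μ hμ (by simpa using hcon)
    have hmem := mem_clarkeSubdiff hf hG hGc w (by simpa using hw)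
    have : lambdaF (fun u => G (f u)) x ≤ ‖w‖ :=
      csInf_le ⟨0, by rintro _ ⟨w, -, rfl⟩; exact norm_nonneg w⟩ ⟨w, hmem, rfl⟩
    linarith
  obtain ⟨v, hv⟩ := hex
  have hv0 : v ≠ 0 := by
    rintro rfl
    simp at hv
  have hn : 0 < ‖v‖ := norm_pos_iff.2 hv0
  refine ⟨‖v‖⁻¹ • v, ?_, by rw [norm_smul, norm_inv, norm_norm, inv_mul_cancel₀ hn.ne']⟩
  have hmap : Tendsto (fun p : X × X × ℝ => (p.1, ‖v‖ • p.2.1, ‖v‖⁻¹ * p.2.2))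
      (𝓝 x ×ˢ 𝓝 (‖v‖⁻¹ • v) ×ˢ 𝓝[>] (0 : ℝ)) (𝓝 x ×ˢ 𝓝 v ×ˢ 𝓝[>] (0 : ℝ)) := by
    refine tendsto_fst.prodMk (Tendsto.prodMk ?_ ?_)
    · have := (tendsto_fst.comp tendsto_snd :
        Tendsto (fun p : X × X × ℝ => p.2.1) (𝓝 x ×ˢ 𝓝 (‖v‖⁻¹ • v) ×ˢ 𝓝[>] (0 : ℝ)) _).const_smul ‖v‖
      simpa [smul_smul, mul_inv_cancel₀ hn.ne'] using this
    · have e3 : Tendsto (fun p : X × X × ℝ => p.2.2) (𝓝 x ×ˢ 𝓝 (‖v‖⁻¹ • v) ×ˢ 𝓝[>] (0 : ℝ))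
        (𝓝[>] 0) := tendsto_snd.comp tendsto_snd
      refine tendsto_nhdsWithin_iff.2
        ⟨by simpa using (e3.mono_right nhdsWithin_le_nhds).const_mul ‖v‖⁻¹, ?_⟩
      filter_upwards [e3.eventually self_mem_nhdsWithin] with p hp
        using mul_pos (inv_pos.2 hn) hp
  have hmain : ∀ᶠ p : X × X × ℝ in 𝓝 x ×ˢ 𝓝 v ×ˢ 𝓝[>] (0 : ℝ),
      G (f (p.1 + p.2.2 • p.2.1)) ≤ G (f p.1) - p.2.2 * (μ * ‖v‖) := by
    have h1 := (tendsto_convex_quotient hf hGc v).eventually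
      (gt_mem_nhds (show _ < -(μ * ‖v‖) by rw [ContinuousLinearEquiv.coe_coe]; linarith))
    have h2 : ∀ᶠ p : X × X × ℝ in 𝓝 x ×ˢ 𝓝 v ×ˢ 𝓝[>] (0 : ℝ), p.2.2 ∈ Ioc (0 : ℝ) 1 :=
      (tendsto_snd.comp tendsto_snd).eventually (Ioc_mem_nhdsGT zero_lt_one)
    filter_upwards [h1, h2] with p hp hp2
    have := quotient_le (f := f) hG p.1 p.2.1 hp2.1 hp2.2
    nlinarith [hp2.1]
  rw [descentDirs, mem_ofPred_eq]
  filter_upwards [hmap.eventually hmain] with p hp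
  have e : (‖v‖⁻¹ * p.2.2) • ‖v‖ • p.2.1 = p.2.2 • p.2.1 := by
    rw [smul_smul]; congr 1; field_simp
  have e2 : ‖v‖⁻¹ * p.2.2 * (μ * ‖v‖) = p.2.2 * μ := by field_simp
  rwa [e, e2] at hp

/-! ### A weighted Ekeland principle -/

/-- The endpoints `a` and `b` may come in any order. -/
theorem integral_le_of_antitone {k : ℝ → ℝ} (hk : Continuous k) (hanti : Antitone k) (a b : ℝ) :
    ∫ r in a..b, k r ≤ k a * (b - a) := by
  rcases le_total a b with hab | hab
  · have := intervalIntegral.integral_mono_on (μ := MeasureTheory.volume) hab (hk.intervalIntegrable a b)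
      (intervalIntegrable_const (μ := MeasureTheory.volume) (c := k a)) (fun r hr => hanti hr.1)
    rw [intervalIntegral.integral_const, smul_eq_mul] at this
    linarith
  · have := intervalIntegral.integral_mono_on (μ := MeasureTheory.volume) hab
      (intervalIntegrable_const (c := k a)) (hk.intervalIntegrable b a)
      (fun r hr => hanti hr.2)
    rw [intervalIntegral.integral_const, smul_eq_mul] at this
    rw [intervalIntegral.integral_symm]
    linarith

/-- A weighted Ekeland principle in contrapositive form. A continuous functional bounded below on a
complete set cannot be lowered, from each point `γ` of a sublevel set, at a rate of at least
`ε * k ‖γ‖` per unit of distance, if the decreasing weight `k` has a divergent integral. -/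
theorem no_uniform_descent {E : Type*} [NormedAddCommGroup E] [CompleteSpace E]
    {Γ : Set E} (hΓ : IsClosed Γ) {Φ : E → ℝ} (hΦ : Continuous Φ) {c : ℝ}
    (hlow : ∀ γ ∈ Γ, c ≤ Φ γ) {k : ℝ → ℝ} (hk : Continuous k) (hanti : Antitone k)
    (hkpos : ∀ r, 0 < k r) (hkint : ∀ B, ∃ R, 0 ≤ R ∧ B < ∫ r in (0 : ℝ)..R, k r)
    {ε : ℝ} (hε : 0 < ε) {γ₀ : E} (hγ₀ : γ₀ ∈ Γ)
    (hdesc : ∀ γ ∈ Γ, Φ γ ≤ Φ γ₀ →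
      ∃ γ' ∈ Γ, Φ γ' < Φ γ ∧ Φ γ' + ε * k ‖γ‖ * ‖γ' - γ‖ ≤ Φ γ) : False := by
  -- The rate is halved so that a descent from the limit of a sequence is also available from its
  -- late terms. Each step goes at least halfway to the infimum of `Φ` over the available points.
  let S : E → Set E := fun γ => {γ' | γ' ∈ Γ ∧ Φ γ' + ε / 2 * k ‖γ‖ * ‖γ' - γ‖ ≤ Φ γ}
  have hstep : ∀ γ : Γ, ∃ γ' : Γ, (γ' : E) ∈ S γ ∧ ∀ η ∈ S γ, 2 * Φ γ' - Φ γ ≤ Φ η := by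
    rintro ⟨γ, hγ⟩
    by_cases hlt : ∃ η ∈ S γ, Φ η < Φ γ
    · obtain ⟨η₀, hη₀, hlt⟩ := hlt
      have hbdd : BddBelow (Φ '' S γ) := ⟨c, by rintro _ ⟨η, hη, rfl⟩; exact hlow η hη.1⟩
      have h1 : sInf (Φ '' S γ) ≤ Φ η₀ := csInf_le hbdd ⟨η₀, hη₀, rfl⟩
      obtain ⟨_, ⟨γ', hγ', rfl⟩, h2⟩ := exists_lt_of_csInf_lt (s := Φ '' S γ) ⟨_, η₀, hη₀, rfl⟩
        (show sInf (Φ '' S γ) < (Φ γ + sInf (Φ '' S γ)) / 2 by linarith)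
      refine ⟨⟨γ', hγ'.1⟩, hγ', fun η hη => ?_⟩
      have h3 : sInf (Φ '' S γ) ≤ Φ η := csInf_le hbdd ⟨η, hη, rfl⟩
      simp only
      linarith
    · push Not at hlt
      refine ⟨⟨γ, hγ⟩, ⟨hγ, by simp⟩, fun η hη => ?_⟩
      have := hlt η hη
      simp only
      linarith
  choose nxt hnxt hopt using hstep
  let u : ℕ → Γ := fun n => nxt^[n] ⟨γ₀, hγ₀⟩
  have hu : ∀ n, u (n + 1) = nxt (u n) := fun n => Function.iterate_succ_apply' _ _ _
  have hd : ∀ n, Φ (u (n + 1)) + ε / 2 * k ‖(u n : E)‖ * ‖(u (n + 1) : E) - u n‖ ≤ Φ (u n) := by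
    intro n
    rw [hu]
    exact (hnxt (u n)).2
  -- The integral of the weight up to `‖u n‖` grows by at most the amount that `Φ` loses.
  have hG : ∀ n, ε / 2 * (∫ r in (0 : ℝ)..‖(u n : E)‖, k r) + Φ (u n) ≤
      ε / 2 * (∫ r in (0 : ℝ)..‖γ₀‖, k r) + Φ γ₀ := by
    intro n
    induction n with
    | zero => exact le_rfl
    | succ n ih =>
      refine le_trans ?_ ih
      have h1 := integral_le_of_antitone hk hanti ‖(u n : E)‖ ‖(u (n + 1) : E)‖
      have h2 := intervalIntegral.integral_add_adjacent_intervals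
        (hk.intervalIntegrable (μ := MeasureTheory.volume) 0 ‖(u n : E)‖)
        (hk.intervalIntegrable (μ := MeasureTheory.volume) ‖(u n : E)‖ ‖(u (n + 1) : E)‖)
      have h3 : k ‖(u n : E)‖ * (‖(u (n + 1) : E)‖ - ‖(u n : E)‖) ≤
          k ‖(u n : E)‖ * ‖(u (n + 1) : E) - u n‖ :=
        mul_le_mul_of_nonneg_left (norm_sub_norm_le _ _) (hkpos _).le
      rw [← h2]
      have h4 := mul_le_mul_of_nonneg_left (h1.trans h3) (half_pos hε).le
      have h5 := hd n
      linarith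
  obtain ⟨R, hR0, hR⟩ := hkint ((ε / 2 * (∫ r in (0 : ℝ)..‖γ₀‖, k r) + Φ γ₀ - c) / (ε / 2))
  rw [div_lt_iff₀ (half_pos hε)] at hR
  have hbound : ∀ n, ‖(u n : E)‖ ≤ R := by
    intro n
    by_contra! hlt
    have h1 := hG n
    have h2 := hlow _ (u n).2
    have h3 : ∫ r in (0 : ℝ)..R, k r ≤ ∫ r in (0 : ℝ)..‖(u n : E)‖, k r :=
      intervalIntegral.integral_mono_interval le_rfl hR0 hlt.le
        (Eventually.of_forall fun r => (hkpos r).le) (hk.intervalIntegrable _ _)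
    nlinarith [half_pos hε]
  have hK : 0 < ε / 2 * k R := mul_pos (half_pos hε) (hkpos R)
  have hd' : ∀ n, dist (u n : E) (u (n + 1)) ≤ (Φ (u n) - Φ (u (n + 1))) / (ε / 2 * k R) := by
    intro n
    rw [le_div_iff₀ hK, dist_eq_norm, norm_sub_rev]
    have h1 := hd n
    have h2 : ε / 2 * k R * ‖(u (n + 1) : E) - u n‖ ≤
        ε / 2 * k ‖(u n : E)‖ * ‖(u (n + 1) : E) - u n‖ := by
      have := hanti (hbound n)
      gcongr
    linarith
  have hcau : CauchySeq (fun n => (u n : E)) := by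
    refine cauchySeq_of_summable_dist (summable_of_sum_range_le
      (c := (Φ (u 0) - c) / (ε / 2 * k R)) (fun n => dist_nonneg) fun n => ?_)
    refine (Finset.sum_le_sum fun i _ => hd' i).trans ?_
    rw [← Finset.sum_div, Finset.sum_range_sub' (fun n => Φ (u n))]
    have := hlow _ (u n).2
    gcongr
  obtain ⟨γ, hlim⟩ := cauchySeq_tendsto_of_complete hcau
  have hγΓ : γ ∈ Γ := hΓ.mem_of_tendsto hlim (Eventually.of_forall fun n => (u n).2)
  have hΦlim : Tendsto (fun n => Φ (u n)) atTop (𝓝 (Φ γ)) := (hΦ.tendsto γ).comp hlim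
  have hanti' : Antitone (fun n => Φ (u n)) := antitone_nat_of_succ_le fun n => by
    have h1 := hd n
    have : 0 ≤ ε / 2 * k ‖(u n : E)‖ * ‖(u (n + 1) : E) - u n‖ :=
      mul_nonneg (mul_pos (half_pos hε) (hkpos _)).le (norm_nonneg _)
    linarith
  obtain ⟨γ', hγ', hlt, hle⟩ := hdesc γ hγΓ (hanti'.le_of_tendsto hΦlim 0)
  have hev : ∀ᶠ n in atTop, Φ γ' + ε / 2 * k ‖(u n : E)‖ * ‖γ' - u n‖ < Φ (u n) := by
    refine Tendsto.eventually_lt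
      (f := fun n => Φ γ' + ε / 2 * k ‖(u n : E)‖ * ‖γ' - u n‖)
      (y := Φ γ' + ε / 2 * k ‖γ‖ * ‖γ' - γ‖) ?_ hΦlim (by linarith)
    have : Continuous fun η : E => Φ γ' + ε / 2 * k ‖η‖ * ‖γ' - η‖ := by fun_prop
    exact (this.tendsto γ).comp hlim
  have hfin : 2 * Φ γ - Φ γ ≤ Φ γ' := by
    refine le_of_tendsto (((hΦlim.comp (tendsto_add_atTop_nat 1)).const_mul 2).sub hΦlim) ?_
    filter_upwards [hev] with n hn
    simp only [Function.comp]
    rw [hu]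
    exact hopt (u n) γ' ⟨hγ', hn.le⟩
  linarith

/-! ### Deformation of paths -/

/-- If at every maximum point of `F` on the path `γ` there is a direction of descent at rate `μ`,
the path can be deformed, keeping the points with `F = 0` fixed, so that the maximum of `F` drops by
at least `μ` times the sup-distance moved. For `F ≥ 0`, the maximum of `F` on `γ` is `‖F.comp γ‖`. -/
theorem exists_descent_path (F : C(X, ℝ)) (hF : ∀ x, 0 ≤ F x) (γ : C(unitInterval, X))
    (hM : 0 < ‖F.comp γ‖) {μ : ℝ} (hμ : 0 < μ)
    (hD : ∀ τ, F (γ τ) = ‖F.comp γ‖ → ∃ v ∈ descentDirs F μ (γ τ), ‖v‖ ≤ 1) :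
    ∃ γ' : C(unitInterval, X), (∀ τ, F (γ τ) = 0 → γ' τ = γ τ) ∧
      ‖F.comp γ'‖ < ‖F.comp γ‖ ∧ ‖F.comp γ'‖ + μ * ‖γ' - γ‖ ≤ ‖F.comp γ‖ := by
  set M := ‖F.comp γ‖ with hMdef
  have hleM : ∀ τ, F (γ τ) ≤ M := fun τ =>
    (le_abs_self _).trans ((F.comp γ).norm_coe_le_norm τ)
  have hFγ : Continuous fun τ => F (γ τ) := by fun_prop
  -- At the maximum points of `F` the direction must descend; where `F` vanishes it must be zero,
  -- which keeps the endpoints of the path in place.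
  have hsel : ∃ v : C(unitInterval, X), ∀ τ, v τ ∈ {v : X | ‖v‖ ≤ 1 ∧
      (F (γ τ) = M → v ∈ descentDirs F μ (γ τ)) ∧ (F (γ τ) ≤ 0 → v = 0)} := by
    refine exists_continuous_forall_mem_convex_of_local_const ?_ ?_
    · rintro τ a ⟨ha1, ha2, ha3⟩ b ⟨hb1, hb2, hb3⟩ α β hα hβ hαβ
      refine ⟨?_, fun h => convex_descentDirs _ _ _ (ha2 h) (hb2 h) hα hβ hαβ, fun h => ?_⟩
      · simpa using convex_closedBall (0 : X) 1 (by simpa using ha1) (by simpa using hb1) hα hβ hαβ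
      · rw [ha3 h, hb3 h]; simp
    · intro τ
      by_cases hτ : F (γ τ) = M
      · obtain ⟨v, hv, hv1⟩ := hD τ hτ
        refine ⟨v, ?_⟩
        filter_upwards [(γ.continuous.tendsto τ).eventually (eventually_mem_descentDirs hv),
          (hFγ.tendsto τ).eventually (lt_mem_nhds (hτ ▸ hM))] with σ h1 h2
        exact ⟨hv1, fun _ => h1, fun h => absurd h h2.not_ge⟩
      · refine ⟨0, ?_⟩
        filter_upwards [(hFγ.tendsto τ).eventually (gt_mem_nhds (lt_of_le_of_ne (hleM τ) hτ))]
          with σ h1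
        exact ⟨by simp, fun h => absurd h h1.ne, fun _ => rfl⟩
  obtain ⟨v, hv⟩ := hsel
  -- Away from the maximum points the bound holds for small `s` by mere continuity.
  have hunif := isCompact_univ.eventually_forall_of_forall_eventually (x₀ := (0 : ℝ))
    (K := (univ : Set unitInterval))
    (P := fun s σ => 0 < s → F (γ σ + s • v σ) ≤ M - s * μ) (by
      intro τ _
      by_cases hτ : F (γ τ) = M
      · have h1 := (hv τ).2.1 hτ
        have hmap : Tendsto (fun z : ℝ × unitInterval => (γ z.2, v z.2, z.1))
            (𝓝[{z | 0 < z.1}] (0, τ)) (𝓝 (γ τ) ×ˢ 𝓝 (v τ) ×ˢ 𝓝[>] (0 : ℝ)) := by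
          refine Tendsto.prodMk ?_ (Tendsto.prodMk ?_ ?_)
          · exact Tendsto.mono_left (((γ.continuous.comp continuous_snd).tendsto _))
              nhdsWithin_le_nhds
          · exact Tendsto.mono_left (((v.continuous.comp continuous_snd).tendsto _))
              nhdsWithin_le_nhds
          · exact tendsto_nhdsWithin_iff.2 ⟨Tendsto.mono_left (continuous_fst.tendsto _)
              nhdsWithin_le_nhds, self_mem_nhdsWithin⟩
        have h2 := eventually_nhdsWithin_iff.1 (hmap.eventually h1)
        filter_upwards [h2] with z hz hz0
        have h3 := hz hz0
        have h4 := hleM z.2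
        linarith
      · have hlt := lt_of_le_of_ne (hleM τ) hτ
        have hc1 : Continuous fun z : ℝ × unitInterval => F (γ z.2 + z.1 • v z.2) := by fun_prop
        have hc2 : Continuous fun z : ℝ × unitInterval => M - z.1 * μ := by fun_prop
        have := (hc1.tendsto (0, τ)).eventually_lt (hc2.tendsto (0, τ)) (by simpa using hlt)
        filter_upwards [this] with z hz _ using hz.le)
  have hex : ∀ᶠ s in 𝓝[>] (0 : ℝ), (∀ σ ∈ (univ : Set unitInterval),
      0 < s → F (γ σ + s • v σ) ≤ M - s * μ) ∧ 0 < s :=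
    (hunif.filter_mono nhdsWithin_le_nhds).and self_mem_nhdsWithin
  obtain ⟨s, hs, hs0⟩ := hex.exists
  have hle : ‖F.comp (γ + s • v)‖ ≤ M - s * μ := by
    refine (ContinuousMap.norm_le_of_nonempty _).2 fun σ => ?_
    have := hs σ (mem_univ _) hs0
    simpa [abs_of_nonneg (hF _)] using this
  refine ⟨γ + s • v, fun τ hτ => ?_, ?_, ?_⟩
  · simp [(hv τ).2.2 hτ.le]
  · have := mul_pos hs0 hμ
    linarith
  · have h1 : ‖v‖ ≤ 1 := (ContinuousMap.norm_le_of_nonempty _).2 fun σ => (hv σ).1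
    have h2 : ‖γ + s • v - γ‖ ≤ s := by
      rw [add_sub_cancel_left, norm_smul, Real.norm_of_nonneg hs0.le]
      nlinarith
    nlinarith

/-! ### The weight, the barrier and the slope -/

theorem weight_integral_unbounded {h : ℝ → ℝ} {k : ℝ → ℝ} (hk : Continuous k)
    (hkpos : ∀ r, 0 < k r) (hkh : ∀ r, 0 ≤ r → k r = 1 / (1 + h r))
    (hint : ∫⁻ ρ in Set.Ioi (0:ℝ), ENNReal.ofReal (1 / (1 + h ρ)) = ⊤) (B : ℝ) :
    ∃ R, 0 ≤ R ∧ B < ∫ r in (0 : ℝ)..R, k r := by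
  by_contra! hcon
  have h1 : MeasureTheory.IntegrableOn k (Ioi 0) := by
    refine MeasureTheory.integrableOn_Ioi_of_intervalIntegral_norm_bounded B 0
      (b := fun n : ℕ => (n : ℝ)) (l := atTop) (fun n => hk.integrableOn_Ioc)
      tendsto_natCast_atTop_atTop (Eventually.of_forall fun n => ?_)
    simpa [abs_of_pos (hkpos _)] using hcon n n.cast_nonneg
  have h2 := MeasureTheory.ofReal_integral_eq_lintegral_ofReal h1
    (Eventually.of_forall fun r => (hkpos r).le)
  rw [MeasureTheory.setLIntegral_congr_fun measurableSet_Ioi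
    (g := fun r => ENNReal.ofReal (1 / (1 + h r)))
    (fun r hr => by simp only [hkh r (le_of_lt hr)]), hint] at h2
  exact ENNReal.ofReal_ne_top h2

/-- Where the derivative is an isomorphism, `f` stays away from `f x` on some sphere around `x`,
of radius less than any prescribed `d`. -/
theorem exists_sphere_barrier {f : X → Y} {A : X ≃L[ℝ] Y} {x : X}
    (hf : HasFDerivAt f (A : X →L[ℝ] Y) x) {d : ℝ} (hd : 0 < d) :
    ∃ r a, 0 < r ∧ r < d ∧ 0 < a ∧ ∀ z, ‖z - x‖ = r → a ≤ ‖f z - f x‖ := by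
  have hA : (fun z ↦ z - x) =O[𝓝 x] fun z ↦ (A : X →L[ℝ] Y) (z - x) := by
    refine Asymptotics.IsBigO.of_bound ‖(A.symm : Y →L[ℝ] X)‖ (Eventually.of_forall fun z => ?_)
    simpa using (A.symm : Y →L[ℝ] X).le_opNorm (A (z - x))
  have heq : Asymptotics.IsEquivalent (𝓝 x) (fun z ↦ f z - f x)
    fun z ↦ (A : X →L[ℝ] Y) (z - x) := hf.isLittleO.trans_isBigO hA
  obtain ⟨C, hC, hCb⟩ := (hA.trans heq.isBigO_symm).exists_pos
  obtain ⟨ρ, hρ, hball⟩ := Metric.eventually_nhds_iff.1 hCb.bound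
  have hr : 0 < min (ρ / 2) (d / 2) := by positivity
  refine ⟨min (ρ / 2) (d / 2), min (ρ / 2) (d / 2) / C, hr,
    (min_le_right _ _).trans_lt (by linarith), by positivity, fun z hz => ?_⟩
  rw [div_le_iff₀ hC, ← hz, mul_comm]
  refine hball ?_
  rw [dist_eq_norm, hz]
  exact (min_le_left _ _).trans_lt (by linarith)

/-- The absence of weighted Palais–Smale sequences at the level `c` gives a uniform lower bound for
the weighted slope near this level. -/
theorem exists_uniform_slope {X : Type*} [NormedAddCommGroup X] {F lam : X → ℝ} {h : ℝ → ℝ} {c : ℝ} (hlam : ∀ x, 0 ≤ lam x)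
    (hnonneg : ∀ t ∈ Set.Ici (0:ℝ), 0 ≤ h t)
    (hno : ¬ ∃ x : ℕ → X, Tendsto (fun n => F (x n)) atTop (𝓝 c) ∧
      Tendsto (fun n => lam (x n) * (1 + h ‖x n‖)) atTop (𝓝 0)) :
    ∃ ε, 0 < ε ∧ ∀ x, |F x - c| < ε → ε ≤ lam x * (1 + h ‖x‖) := by
  by_contra! hcon
  choose x hx1 hx2 using fun n : ℕ => hcon (1 / ((n : ℝ) + 1)) (by positivity)
  refine hno ⟨x, ?_, ?_⟩
  · rw [tendsto_iff_dist_tendsto_zero]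
    exact squeeze_zero (fun n => dist_nonneg) (fun n => (hx1 n).le)
      tendsto_one_div_add_atTop_nhds_zero_nat
  · refine squeeze_zero (fun n => mul_nonneg (hlam _) ?_) (fun n => (hx2 n).le)
      tendsto_one_div_add_atTop_nhds_zero_nat
    linarith [hnonneg ‖x n‖ (norm_nonneg _)]

end

theorem injectivity_criterion {X Y : Type*} [NormedAddCommGroup X] [NormedSpace ℝ X] [CompleteSpace X]
    [NormedAddCommGroup Y] [NormedSpace ℝ Y] [CompleteSpace Y]
    (f : X → Y) (f' : X → X ≃L[ℝ] Y)
    (hC1 : ContDiff ℝ 1 f)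
    (hdf : ∀ x : X, HasFDerivAt f (f' x : X →L[ℝ] Y) x)
    (h : ℝ → ℝ)
    (hcont : ContinuousOn h (Set.Ici 0))
    (hmono : MonotoneOn h (Set.Ici 0))
    (hnonneg : ∀ t ∈ Set.Ici (0:ℝ), 0 ≤ h t)
    (hint : ∫⁻ ρ in Set.Ioi (0:ℝ), ENNReal.ofReal (1 / (1 + h ρ)) = ⊤)
    (hdag : ∀ y : Y, ¬ ∃ (x : ℕ → X) (c : ℝ), 0 < c ∧
      Filter.Tendsto (fun n => (1/2 : ℝ) * ‖f (x n) - y‖ ^ 2) Filter.atTop (nhds c) ∧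
      Filter.Tendsto
        (fun n => lambdaF (fun u => (1/2 : ℝ) * ‖f u - y‖ ^ 2) (x n) * (1 + h ‖x n‖))
        Filter.atTop (nhds 0)) :
    Function.Injective f := by
  intro x₁ x₂ hx
  by_contra hne
  set y := f x₁ with hy
  let G : Y → ℝ := fun z => (1 / 2 : ℝ) * ‖z - y‖ ^ 2
  have hGc : Continuous G := by fun_prop
  have hG : ConvexOn ℝ univ G := by
    have h1 : ConvexOn ℝ univ (fun z : Y => ‖z - y‖) := by
      simpa [Function.comp_def, sub_eq_add_neg] using (convexOn_norm (E := Y) convex_univ).translate_left (-y)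
    have h2 := (h1.pow (fun _ _ => norm_nonneg _) 2).smul (show (0 : ℝ) ≤ 1 / 2 by norm_num)
    simpa [G] using h2
  have hstrict : ∀ x, HasStrictFDerivAt f (f' x : X →L[ℝ] Y) x := fun x =>
    hC1.contDiffAt.hasStrictFDerivAt' (hdf x) one_ne_zero
  let F : C(X, ℝ) := ⟨fun u => G (f u), hGc.comp hC1.continuous⟩
  have hF0 : ∀ u, 0 ≤ F u := fun u => by
    change (0 : ℝ) ≤ 1 / 2 * ‖f u - y‖ ^ 2
    positivity
  have hF1 : F x₁ = 0 := by
    change (1 / 2 : ℝ) * ‖f x₁ - y‖ ^ 2 = 0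
    simp [hy]
  have hF2 : F x₂ = 0 := by
    change (1 / 2 : ℝ) * ‖f x₂ - y‖ ^ 2 = 0
    simp [← hx]
  let Γ : Set C(unitInterval, X) := {γ | γ 0 = x₁ ∧ γ 1 = x₂}
  have hΓ : IsClosed Γ :=
    (isClosed_eq (continuous_eval_const 0) continuous_const).inter
      (isClosed_eq (continuous_eval_const 1) continuous_const)
  let Φ : C(unitInterval, X) → ℝ := fun γ => ‖F.comp γ‖
  have hΦ : Continuous Φ := (ContinuousMap.continuous_postcomp F).norm
  -- Mountain ridge: every path in `Γ` meets a small sphere around `x₁`, where `F ≥ a ^ 2 / 2`.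
  obtain ⟨r, a, hr, hrd, ha, hbar⟩ := exists_sphere_barrier (hdf x₁)
    (norm_pos_iff.2 (sub_ne_zero.2 (Ne.symm hne)))
  have hridge : ∀ γ ∈ Γ, 1 / 2 * a ^ 2 ≤ Φ γ := by
    rintro γ ⟨h0, h1⟩
    have hc : ContinuousOn (fun τ => ‖γ τ - x₁‖) (univ : Set unitInterval) := by fun_prop
    obtain ⟨τ, -, hτ⟩ := isPreconnected_univ.intermediate_value (mem_univ (0 : unitInterval))
      (mem_univ (1 : unitInterval)) hc
      (show r ∈ Icc ‖γ 0 - x₁‖ ‖γ 1 - x₁‖ by rw [h0, h1]; simpa using ⟨hr.le, hrd.le⟩)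
    have h2 : a ≤ ‖f (γ τ) - y‖ := hbar _ hτ
    have h3 : F (γ τ) ≤ Φ γ := (le_abs_self _).trans ((F.comp γ).norm_coe_le_norm τ)
    have h4 : (1 / 2 : ℝ) * a ^ 2 ≤ 1 / 2 * ‖f (γ τ) - y‖ ^ 2 := by gcongr
    exact h4.trans h3
  have hne' : Γ.Nonempty :=
    ⟨⟨fun τ => x₁ + (τ : ℝ) • (x₂ - x₁), by fun_prop⟩, by simp [Γ]⟩
  set c := sInf (Φ '' Γ) with hc
  have hbdd : BddBelow (Φ '' Γ) := ⟨1 / 2 * a ^ 2, by rintro _ ⟨γ, hγ, rfl⟩; exact hridge γ hγ⟩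
  have hcpos : 0 < c := lt_of_lt_of_le (show 0 < 1 / 2 * a ^ 2 by positivity)
    (le_csInf (hne'.image Φ) (by rintro _ ⟨γ, hγ, rfl⟩; exact hridge γ hγ))
  have hlow : ∀ γ ∈ Γ, c ≤ Φ γ := fun γ hγ => csInf_le hbdd ⟨γ, hγ, rfl⟩
  obtain ⟨ε, hε, hslope⟩ := exists_uniform_slope (F := F) (lam := lambdaF F) (c := c) (h := h)
    (fun x => Real.sInf_nonneg (by rintro _ ⟨w, -, rfl⟩; exact norm_nonneg w)) hnonneg
    (fun ⟨x, hx1, hx2⟩ => hdag y ⟨x, c, hcpos, hx1, hx2⟩)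
  obtain ⟨_, ⟨γ₀, hγ₀, rfl⟩, hγ₀c⟩ := exists_lt_of_csInf_lt (hne'.image Φ)
    (show sInf (Φ '' Γ) < c + ε by linarith)
  -- `h` is only controlled on `[0, ∞)`, so the weight is extended constantly to the left of `0`.
  let k : ℝ → ℝ := fun r => 1 / (1 + h (max r 0))
  have hhmax : ∀ r, 0 ≤ h (max r 0) := fun r => hnonneg _ (mem_Ici.2 (le_max_right _ _))
  have hkpos : ∀ r, 0 < k r := fun r => by
    have := hhmax r
    change 0 < 1 / (1 + h (max r 0))
    positivity
  have hkc : Continuous k := by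
    have h1 : Continuous fun r : ℝ => h (max r 0) :=
      hcont.comp_continuous (by fun_prop) fun r => mem_Ici.2 (le_max_right _ _)
    exact continuous_const.div (continuous_const.add h1) fun r => by have := hhmax r; positivity
  have hkanti : Antitone k := fun r s hrs => by
    refine one_div_le_one_div_of_le (by have := hhmax r; positivity) ?_
    have := hmono (mem_Ici.2 (le_max_right r 0)) (mem_Ici.2 (le_max_right s 0)) (max_le_max_right 0 hrs)
    linarith
  have hkh : ∀ r, 0 ≤ r → k r = 1 / (1 + h r) := fun r hr => by simp only [k, max_eq_left hr]
  refine no_uniform_descent hΓ hΦ hlow hkc hkanti hkpos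
    (weight_integral_unbounded hkc hkpos hkh hint) (half_pos hε) hγ₀ fun γ hγ hγle => ?_
  have hcγ := hlow γ hγ
  obtain ⟨γ', hfix, hlt, hle⟩ := exists_descent_path F hF0 γ (hcpos.trans_le hcγ)
    (mul_pos (half_pos hε) (hkpos ‖γ‖)) (fun τ hτ => by
      refine exists_descentDir (hstrict (γ τ)) hG hGc
        (mul_pos (half_pos hε) (hkpos ‖γ‖)).le ?_
      have h1 := hslope (γ τ) (by
        rw [hτ, abs_lt]
        change -ε < Φ γ - c ∧ Φ γ - c < ε
        constructor <;> linarith)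
      have h2 : k ‖γ‖ ≤ k ‖γ τ‖ := hkanti (γ.norm_coe_le_norm τ)
      have h3 : ε * k ‖γ τ‖ ≤ lambdaF F (γ τ) := by
        have := hnonneg ‖γ τ‖ (norm_nonneg _)
        rw [hkh _ (norm_nonneg _), mul_one_div, div_le_iff₀ (by positivity)]
        exact h1
      change ε / 2 * k ‖γ‖ < lambdaF F (γ τ)
      nlinarith [hkpos ‖γ‖])
  refine ⟨γ', ⟨?_, ?_⟩, hlt, hle⟩
  · rw [hfix 0 (by rw [hγ.1, hF1]), hγ.1]
  · rw [hfix 1 (by rw [hγ.2, hF2]), hγ.2]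
end
end

section
/- (Surjectivity criterion) Let X and Y be real Banach spaces, let f : X → Y be a local C¹-diffeomorphism, and let h : [0,∞) → [0,∞) be a continuous nondecreasing function with ∫₀^∞ dρ/(1+h(ρ)) = ∞. Suppose that for each y ∈ Y, every sequence {x_n} in X such that F_y(x_n) → 0 and λ_{F_y}(x_n)(1+h(‖x_n‖)) → 0, where F_y(x) = ½‖f(x) − y‖², has a strongly convergent subsequence. Then f is surjective onto Y. -/
/-!
The range of a local diffeomorphism is open, so it suffices to show that it is closed: `Y` is
connected and the range is nonempty. Let `y` lie in the closure of the range, so that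
`F u = ½ ‖f u - y‖²` has infimum `0`.

The weighted Ekeland principle (`exists_weighted_ekeland`, due to Zhong) produces, for every `ε > 0`,
a point `z` with `F z ≤ ε` and `F z - ε / (1 + h ‖z‖) * ‖x - z‖ ≤ F x` for all `x`. It is obtained as
the limit of a nearly optimal descent sequence. The divergence of `∫ dρ / (1 + h ρ)` enters only in
`descent_length_bounded`: each descent step pays at least `ε` times the integral of `1 / (1 + h)`
over the length travelled, and the total budget is `F x₀`, so the total length is finite.

A point `z` with slope at least `-c` has a Clarke subgradient of norm at most `c`
(`lambdaF_le_of_slope`): the sublinear functional `F⁰(z; ·)` dominates `-c ‖·‖`, and the Hahn-Banach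
theorem inserts a linear functional between the two. Hence the points `z` for `ε = 1 / (n + 1)` form
a sequence as in the compactness hypothesis, and a limit of a subsequence is a zero of `F`, that is,
a preimage of `y`.
-/

open Filter Topology Set

noncomputable section

/-! ### Clarke directional derivatives of locally Lipschitz functions -/

section Clarke

variable {X : Type*} [NormedAddCommGroup X] [NormedSpace ℝ X]

/-- `F` is Lipschitz with constant `K` on a neighbourhood of `x`. -/
def LipNear (F : X → ℝ) (K : ℝ) (x : X) : Prop :=
  ∃ s ∈ 𝓝 x, ∀ a ∈ s, ∀ b ∈ s, |F a - F b| ≤ K * ‖a - b‖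

/-- The filter over which the limit superior in `clarkeDeriv` is taken. -/
abbrev clarkeFilter (X : Type*) [NormedAddCommGroup X] : Filter (X × ℝ) :=
  (𝓝 (0 : X)) ×ˢ (𝓝[>] (0 : ℝ))

/-- The difference quotient in `clarkeDeriv`. -/
def clarkeQuot (F : X → ℝ) (x v : X) (p : X × ℝ) : ℝ :=
  (F (x + p.1 + p.2 • v) - F (x + p.1)) / p.2

lemma clarkeDeriv_eq (F : X → ℝ) (x v : X) :
    clarkeDeriv F x v = limsup (clarkeQuot F x v) (clarkeFilter X) := rfl

lemma eventually_pos {X : Type*} [NormedAddCommGroup X] : ∀ᶠ p in clarkeFilter X, 0 < p.2 :=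
  tendsto_snd.eventually (self_mem_nhdsWithin : Ioi (0 : ℝ) ∈ 𝓝[>] (0 : ℝ))

lemma tendsto_snd_zero {X : Type*} [NormedAddCommGroup X] :
    Tendsto (fun p : X × ℝ => p.2) (clarkeFilter X) (𝓝 0) :=
  tendsto_snd.mono_right nhdsWithin_le_nhds

lemma tendsto_shift (v : X) :
    Tendsto (fun p : X × ℝ => p.1 + p.2 • v) (clarkeFilter X) (𝓝 0) := by
  simpa using (tendsto_fst (f := 𝓝 (0 : X)) (g := 𝓝[>] (0 : ℝ))).add
    ((tendsto_snd_zero (X := X)).smul_const v)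

lemma quot_bound {F : X → ℝ} {K : ℝ} {x : X} (hF : LipNear F K x) (v : X) :
    ∀ᶠ p in clarkeFilter X, |clarkeQuot F x v p| ≤ K * ‖v‖ := by
  obtain ⟨s, hs, hK⟩ := hF
  have h1 : Tendsto (fun p : X × ℝ => x + (p.1 + p.2 • v)) (clarkeFilter X) (𝓝 x) := by
    simpa using (tendsto_shift v).const_add x
  have h2 : Tendsto (fun p : X × ℝ => x + p.1) (clarkeFilter X) (𝓝 x) := by
    simpa using (tendsto_fst (f := 𝓝 (0 : X)) (g := 𝓝[>] (0 : ℝ))).const_add x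
  filter_upwards [h1.eventually hs, h2.eventually hs, eventually_pos] with p ha hb hp
  have := hK _ ha _ hb
  have e : x + (p.1 + p.2 • v) - (x + p.1) = p.2 • v := by abel
  rw [e, norm_smul, Real.norm_of_nonneg hp.le] at this
  rw [clarkeQuot, abs_div, abs_of_pos hp, div_le_iff₀ hp, add_assoc]
  linarith

lemma quot_bddAbove {F : X → ℝ} {K : ℝ} {x : X} (hF : LipNear F K x) (v : X) :
    IsBoundedUnder (· ≤ ·) (clarkeFilter X) (clarkeQuot F x v) :=
  ⟨K * ‖v‖, by
    rw [eventually_map]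
    filter_upwards [quot_bound hF v] with p hp using (abs_le.1 hp).2⟩

lemma quot_cobdd {F : X → ℝ} {K : ℝ} {x : X} (hF : LipNear F K x) (v : X) :
    IsCoboundedUnder (· ≤ ·) (clarkeFilter X) (clarkeQuot F x v) := by
  have : IsBoundedUnder (· ≥ ·) (clarkeFilter X) (clarkeQuot F x v) :=
    ⟨-(K * ‖v‖), by
      rw [eventually_map]
      filter_upwards [quot_bound hF v] with p hp using (abs_le.1 hp).1⟩
  exact this.isCoboundedUnder_le

lemma clarke_le {F : X → ℝ} {K : ℝ} {x : X} (hF : LipNear F K x) {v : X} {a : ℝ}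
    (h : ∀ᶠ p in clarkeFilter X, clarkeQuot F x v p ≤ a) : clarkeDeriv F x v ≤ a := by
  rw [clarkeDeriv_eq]
  exact limsup_le_of_le (quot_cobdd hF v) h

lemma clarke_lt {F : X → ℝ} {K : ℝ} {x : X} (hF : LipNear F K x) {v : X} {a : ℝ}
    (h : clarkeDeriv F x v < a) : ∀ᶠ p in clarkeFilter X, clarkeQuot F x v p < a := by
  rw [clarkeDeriv_eq] at h
  exact eventually_lt_of_limsup_lt h (quot_bddAbove hF v)

lemma clarke_add {F : X → ℝ} {K : ℝ} {x : X} (hF : LipNear F K x) (u v : X) :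
    clarkeDeriv F x (u + v) ≤ clarkeDeriv F x u + clarkeDeriv F x v := by
  refine le_of_forall_pos_le_add fun ε hε => ?_
  have hu := clarke_lt hF (v := u) (a := clarkeDeriv F x u + ε / 2) (by linarith)
  have hv := clarke_lt hF (v := v) (a := clarkeDeriv F x v + ε / 2) (by linarith)
  -- The base point of the second quotient is moved by `t • u`, which the limsup over `h` permits.
  have hT : Tendsto (fun p : X × ℝ => (p.1 + p.2 • u, p.2)) (clarkeFilter X) (clarkeFilter X) :=
    (tendsto_shift u).prodMk tendsto_snd
  refine clarke_le hF ?_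
  filter_upwards [hu, hT.eventually hv] with p h1 h2
  have e : clarkeQuot F x (u + v) p
      = clarkeQuot F x u p + clarkeQuot F x v (p.1 + p.2 • u, p.2) := by
    simp only [clarkeQuot, smul_add, ← add_assoc, ← add_div]
    congr 1
    ring
  linarith

lemma clarke_smul_le {F : X → ℝ} {K : ℝ} {x : X} (hF : LipNear F K x) {s : ℝ} (hs : 0 < s)
    (v : X) : clarkeDeriv F x (s • v) ≤ s * clarkeDeriv F x v := by
  refine le_of_forall_pos_le_add fun ε hε => ?_
  have hv := clarke_lt hF (v := v) (a := clarkeDeriv F x v + ε / s)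
    (by linarith [div_pos hε hs])
  have hsc : Tendsto (fun p : X × ℝ => p.2 * s) (clarkeFilter X) (𝓝[>] 0) := by
    refine tendsto_nhdsWithin_iff.2 ⟨?_, ?_⟩
    · simpa using (tendsto_snd_zero (X := X)).mul_const s
    · filter_upwards [eventually_pos] with p hp using mul_pos hp hs
  have hT : Tendsto (fun p : X × ℝ => (p.1, p.2 * s)) (clarkeFilter X) (clarkeFilter X) :=
    tendsto_fst.prodMk hsc
  refine clarke_le hF ?_
  filter_upwards [hT.eventually hv, eventually_pos] with p h1 hp
  have e : clarkeQuot F x (s • v) p = s * clarkeQuot F x v (p.1, p.2 * s) := by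
    simp only [clarkeQuot, smul_smul]
    field_simp
  rw [e]
  have := mul_le_mul_of_nonneg_left h1.le hs.le
  have e2 : s * (clarkeDeriv F x v + ε / s) = s * clarkeDeriv F x v + ε := by field_simp
  linarith

lemma clarke_smul {F : X → ℝ} {K : ℝ} {x : X} (hF : LipNear F K x) {s : ℝ} (hs : 0 < s)
    (v : X) : clarkeDeriv F x (s • v) = s * clarkeDeriv F x v := by
  refine le_antisymm (clarke_smul_le hF hs v) ?_
  have := clarke_smul_le hF (inv_pos.2 hs) (s • v)
  rw [smul_smul, inv_mul_cancel₀ hs.ne', one_smul] at this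
  calc s * clarkeDeriv F x v ≤ s * (s⁻¹ * clarkeDeriv F x (s • v)) :=
        mul_le_mul_of_nonneg_left this hs.le
    _ = _ := by field_simp

lemma clarke_ge {F : X → ℝ} {K c : ℝ} {x : X} (hF : LipNear F K x)
    (hc : ∀ x', F x - c * ‖x' - x‖ ≤ F x') (v : X) : -(c * ‖v‖) ≤ clarkeDeriv F x v := by
  rw [clarkeDeriv_eq]
  refine le_limsup_of_frequently_le ?_ (quot_bddAbove hF v)
  have hT : Tendsto (fun t : ℝ => ((0 : X), t)) (𝓝[>] 0) (clarkeFilter X) :=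
    tendsto_const_nhds.prodMk tendsto_id
  refine hT.frequently (Eventually.frequently ?_)
  filter_upwards [self_mem_nhdsWithin] with t ht
  have ht : 0 < t := ht
  have := hc (x + t • v)
  rw [add_sub_cancel_left, norm_smul, Real.norm_of_nonneg ht.le] at this
  simp only [clarkeQuot, add_zero]
  rw [le_div_iff₀ ht]
  linarith

/-- A linear functional fits between `-c ‖·‖` and a sublinear `N` dominating it. The Hahn-Banach
extension is carried out on `X × X` for `(u, v) ↦ N u + c ‖v‖`, starting from the zero functional
on the antidiagonal. -/
lemma exists_sandwich (N : X → ℝ) (c : ℝ) (hc0 : 0 ≤ c)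
    (hsmul : ∀ s : ℝ, 0 < s → ∀ v, N (s • v) = s * N v)
    (hadd : ∀ u v, N (u + v) ≤ N u + N v) (hge : ∀ v, -(c * ‖v‖) ≤ N v) :
    ∃ w : X →L[ℝ] ℝ, (∀ v, w v ≤ N v) ∧ ‖w‖ ≤ c := by
  have hN0 : N 0 = 0 := by
    have := hsmul 2 (by norm_num) 0
    rw [smul_zero] at this
    linarith
  let D : Submodule ℝ (X × X) := LinearMap.ker (LinearMap.fst ℝ X X + LinearMap.snd ℝ X X)
  obtain ⟨g, hg1, hg2⟩ := exists_extension_of_le_sublinear (⟨D, 0⟩ : (X × X) →ₗ.[ℝ] ℝ)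
    (fun p => N p.1 + c * ‖p.2‖)
    (fun s hs p => by
      simp only [Prod.smul_fst, Prod.smul_snd, hsmul s hs, norm_smul, Real.norm_of_nonneg hs.le]
      ring)
    (fun p q => by
      have := mul_le_mul_of_nonneg_left (norm_add_le p.2 q.2) hc0
      have := hadd p.1 q.1
      simp only [Prod.fst_add, Prod.snd_add]
      linarith)
    (by
      rintro ⟨⟨u, v⟩, hp⟩
      have hp : u + v = 0 := by simpa [D] using hp
      have hv : v = -u := (neg_eq_of_add_eq_zero_right hp).symm
      have := hge u
      change (0 : ℝ) ≤ N u + c * ‖v‖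
      rw [hv, norm_neg]
      linarith)
  have hanti : ∀ u, g (u, 0) = g (0, u) := fun u => by
    have h0 : g (u, -u) = 0 := hg1 ⟨(u, -u), by simp [D]⟩
    have e : ((u, -u) : X × X) = (u, 0) - (0, u) := by simp
    rw [e, map_sub] at h0
    linarith
  let L : X →ₗ[ℝ] ℝ := g ∘ₗ LinearMap.inl ℝ X X
  have hL : ∀ u, L u ≤ c * ‖u‖ := fun u => by
    have := hg2 (0, u)
    simp only [hN0, zero_add] at this
    change g (u, 0) ≤ _
    rwa [hanti]
  have hLb : ∀ u, ‖L u‖ ≤ c * ‖u‖ := fun u => by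
    have := hL (-u)
    rw [map_neg, norm_neg] at this
    exact abs_le.2 ⟨by linarith, hL u⟩
  refine ⟨L.mkContinuous c hLb, fun v => ?_, L.mkContinuous_norm_le hc0 _⟩
  have := hg2 (v, 0)
  simp only [norm_zero, mul_zero, add_zero] at this
  exact this

lemma lambdaF_nonneg (F : X → ℝ) (x : X) : 0 ≤ lambdaF F x := by
  refine Real.sInf_nonneg ?_
  rintro _ ⟨w, -, rfl⟩
  exact norm_nonneg w

lemma lambdaF_le_of_slope {F : X → ℝ} {K c : ℝ} {x : X} (hF : LipNear F K x) (hc0 : 0 ≤ c)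
    (hc : ∀ x', F x - c * ‖x' - x‖ ≤ F x') : lambdaF F x ≤ c := by
  obtain ⟨w, hw, hwc⟩ := exists_sandwich (clarkeDeriv F x) c hc0
    (fun s hs v => clarke_smul hF hs v) (clarke_add hF) (clarke_ge hF hc)
  refine le_trans (csInf_le ⟨0, ?_⟩ ⟨w, hw, rfl⟩) hwc
  rintro _ ⟨w, -, rfl⟩
  exact norm_nonneg w

end Clarke

/-! ### The weighted Ekeland principle -/

section Ekeland

open MeasureTheory

/-- A descent whose steps `s (n + 1) - s n`, discounted by `ε / (1 + h (s n))`, are paid for by the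
decrease of a nonnegative quantity `a` has bounded total length. -/
lemma descent_length_bounded {h : ℝ → ℝ} (hmono : MonotoneOn h (Ici 0))
    (hnonneg : ∀ t ∈ Ici (0 : ℝ), 0 ≤ h t)
    (hint : ∫⁻ ρ in Ioi (0 : ℝ), ENNReal.ofReal (1 / (1 + h ρ)) = ⊤)
    {s a : ℕ → ℝ} {ε : ℝ} (hε : 0 < ε) (hs0 : 0 ≤ s 0) (hs : Monotone s) (ha : ∀ n, 0 ≤ a n)
    (hstep : ∀ n, ε / (1 + h (s n)) * (s (n + 1) - s n) ≤ a n - a (n + 1)) :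
    ∃ C, ∀ n, s n ≤ C := by
  by_contra! hunb
  let g : ℝ → ENNReal := fun ρ => ENNReal.ofReal (1 / (1 + h ρ))
  have hsn : ∀ n, 0 ≤ s n := fun n => hs0.trans (hs (Nat.zero_le n))
  have hpiece : ∀ p q : ℝ, 0 ≤ p → p ≤ q →
      ∫⁻ ρ in Ioc p q, g ρ ≤ ENNReal.ofReal (1 / (1 + h p) * (q - p)) := by
    intro p q hp hpq
    have hhp := hnonneg p hp
    calc ∫⁻ ρ in Ioc p q, g ρ ≤ ∫⁻ ρ in Ioc p q, ENNReal.ofReal (1 / (1 + h p)) := by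
          refine setLIntegral_mono' measurableSet_Ioc fun ρ hρ => ENNReal.ofReal_le_ofReal ?_
          have := hmono hp (hp.trans hρ.1.le : (0 : ℝ) ≤ ρ) hρ.1.le
          exact one_div_le_one_div_of_le (by linarith) (by linarith)
      _ = _ := by
          rw [setLIntegral_const, Real.volume_Ioc, ← ENNReal.ofReal_mul (by positivity)]
  have hbound : ∀ n, ∫⁻ ρ in Ioc 0 (s n), g ρ ≤ ENNReal.ofReal (s 0 + (a 0 - a n) / ε) := by
    intro n
    have hdec : ∀ n, a (n + 1) ≤ a n := fun n => by
      have h1 := hnonneg _ (hsn n)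
      have h2 : 0 ≤ s (n + 1) - s n := sub_nonneg.2 (hs n.le_succ)
      have : 0 ≤ ε / (1 + h (s n)) * (s (n + 1) - s n) := by positivity
      linarith [hstep n]
    induction n with
    | zero =>
      refine (hpiece 0 (s 0) le_rfl hs0).trans (ENNReal.ofReal_le_ofReal ?_)
      have h0 := hnonneg 0 (le_refl (0 : ℝ))
      have : 1 / (1 + h 0) ≤ 1 := by
        rw [div_le_one (by linarith)]
        linarith
      simp only [sub_zero, sub_self, zero_div, add_zero]
      exact mul_le_of_le_one_left hs0 this
    | succ n ih =>
      have han : a n ≤ a 0 := antitone_nat_of_succ_le hdec (Nat.zero_le n)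
      calc ∫⁻ ρ in Ioc 0 (s (n + 1)), g ρ
          ≤ ∫⁻ ρ in Ioc 0 (s n) ∪ Ioc (s n) (s (n + 1)), g ρ :=
            lintegral_mono_set (Ioc_union_Ioc_eq_Ioc (hsn n) (hs n.le_succ)).ge
        _ ≤ (∫⁻ ρ in Ioc 0 (s n), g ρ) + ∫⁻ ρ in Ioc (s n) (s (n + 1)), g ρ :=
            lintegral_union_le _ _ _
        _ ≤ ENNReal.ofReal (s 0 + (a 0 - a n) / ε) + ENNReal.ofReal ((a n - a (n + 1)) / ε) := by
            refine add_le_add ih ((hpiece _ _ (hsn n) (hs n.le_succ)).trans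
              (ENNReal.ofReal_le_ofReal ?_))
            rw [le_div_iff₀ hε]
            refine le_trans (le_of_eq ?_) (hstep n)
            ring
        _ = ENNReal.ofReal (s 0 + (a 0 - a (n + 1)) / ε) := by
            rw [← ENNReal.ofReal_add]
            · congr 1
              ring
            · have := div_nonneg (sub_nonneg.2 han) hε.le
              linarith
            · exact div_nonneg (sub_nonneg.2 (hdec n)) hε.le
  have hunion : Ioi (0 : ℝ) = ⋃ n, Ioc 0 (s n) := by
    ext ρ
    simp only [mem_Ioi, mem_iUnion, mem_Ioc]
    refine ⟨fun hρ => ?_, fun ⟨_, hρ, _⟩ => hρ⟩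
    obtain ⟨n, hn⟩ := hunb ρ
    exact ⟨n, hρ, hn.le⟩
  have hmonoS : Monotone fun n => Ioc 0 (s n) := fun m n hmn => Ioc_subset_Ioc_right (hs hmn)
  have hfin : ∫⁻ ρ in Ioi (0 : ℝ), g ρ ≤ ENNReal.ofReal (s 0 + a 0 / ε) := by
    rw [hunion, setLIntegral_iUnion_of_directed _ (directed_of_isDirected_le hmonoS)]
    refine iSup_le fun n => (hbound n).trans (ENNReal.ofReal_le_ofReal ?_)
    have := ha n
    gcongr
    linarith
  exact absurd (hint ▸ hfin) (by simp)

/-- The weighted Ekeland variational principle of Zhong. -/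
lemma exists_weighted_ekeland {X : Type*} [NormedAddCommGroup X] [CompleteSpace X]
    {h : ℝ → ℝ} (hcont : ContinuousOn h (Ici 0)) (hmono : MonotoneOn h (Ici 0))
    (hnonneg : ∀ t ∈ Ici (0 : ℝ), 0 ≤ h t)
    (hint : ∫⁻ ρ in Ioi (0 : ℝ), ENNReal.ofReal (1 / (1 + h ρ)) = ⊤)
    {F : X → ℝ} (hF : Continuous F) (hF0 : ∀ x, 0 ≤ F x) {ε : ℝ} (hε : 0 < ε) (x₀ : X) :
    ∃ z, F z ≤ F x₀ ∧ ∀ x, F z - ε / (1 + h ‖z‖) * ‖x - z‖ ≤ F x := by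
  let S : X → Set X := fun x => {x' | F x' ≤ F x - ε / (1 + h ‖x‖) * ‖x' - x‖}
  have hself : ∀ x, x ∈ S x := fun x => by simp [S]
  have hw : ∀ x : X, 0 ≤ ε / (1 + h ‖x‖) := fun x => by
    have := hnonneg ‖x‖ (norm_nonneg x)
    positivity
  -- A step of the descent realizes at least half of the decrease of `F` possible within `S x`.
  have hexists : ∀ x, ∃ x' ∈ S x, ∀ y ∈ S x, F x' ≤ (F x + F y) / 2 := by
    intro x
    by_contra! hcon
    have hbdd : BddBelow (F '' S x) := ⟨0, by rintro _ ⟨y, -, rfl⟩; exact hF0 y⟩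
    obtain ⟨y, hy, hyx⟩ := hcon x (hself x)
    have hI : sInf (F '' S x) ≤ F y := csInf_le hbdd ⟨y, hy, rfl⟩
    obtain ⟨_, ⟨u, hu, rfl⟩, hlt⟩ := exists_lt_of_csInf_lt
      (⟨_, x, hself x, rfl⟩ : (F '' S x).Nonempty)
      (show sInf (F '' S x) < (F x + sInf (F '' S x)) / 2 by linarith)
    obtain ⟨v, hv, hvu⟩ := hcon u hu
    have := csInf_le hbdd ⟨v, hv, rfl⟩
    linarith
  choose step hstepS hstepF using hexists
  let x : ℕ → X := fun n => step^[n] x₀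
  have hx : ∀ n, x (n + 1) = step (x n) := fun n => Function.iterate_succ_apply' step n x₀
  have hdesc : ∀ n, F (x (n + 1)) ≤ F (x n) - ε / (1 + h ‖x n‖) * ‖x (n + 1) - x n‖ := fun n => by
    rw [hx]
    exact hstepS (x n)
  have hFanti : Antitone fun n => F (x n) := antitone_nat_of_succ_le fun n => by
    have := mul_nonneg (hw (x n)) (norm_nonneg (x (n + 1) - x n))
    linarith [hdesc n]
  let s : ℕ → ℝ := fun n => ‖x₀‖ + ∑ k ∈ Finset.range n, ‖x (k + 1) - x k‖
  have hs1 : ∀ n, s (n + 1) = s n + ‖x (n + 1) - x n‖ := fun n => by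
    simp only [s, Finset.sum_range_succ, add_assoc]
  have hsx : ∀ n, ‖x n‖ ≤ s n := fun n => by
    induction n with
    | zero => simp [s, x]
    | succ n ih =>
      rw [hs1]
      have := norm_add_le (x n) (x (n + 1) - x n)
      rw [add_sub_cancel] at this
      linarith
  have hsn : ∀ n, 0 ≤ s n := fun n => (norm_nonneg _).trans (hsx n)
  obtain ⟨C, hC⟩ := descent_length_bounded hmono hnonneg hint (s := s) (a := fun n => F (x n)) hε
    (hsn 0) (monotone_nat_of_le_succ fun n => by rw [hs1]; linarith [norm_nonneg (x (n + 1) - x n)])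
    (fun n => hF0 _) (fun n => by
      have h1 := hmono (norm_nonneg (x n)) (hsn n) (hsx n)
      have h2 := hnonneg ‖x n‖ (norm_nonneg _)
      have h3 : ε / (1 + h (s n)) ≤ ε / (1 + h ‖x n‖) := by gcongr
      have h4 := mul_le_mul_of_nonneg_right h3 (norm_nonneg (x (n + 1) - x n))
      have := hdesc n
      rw [hs1, add_sub_cancel_left]
      linarith)
  have hsum : Summable fun n => ‖x (n + 1) - x n‖ :=
    summable_of_sum_range_le (c := C) (fun n => norm_nonneg _) fun n => by
      have := hC n
      simp only [s] at this
      linarith [norm_nonneg x₀]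
  have hcau : CauchySeq x := cauchySeq_of_summable_dist (by
    simpa only [dist_eq_norm, norm_sub_rev] using hsum)
  obtain ⟨z, hz⟩ := cauchySeq_tendsto_of_complete hcau
  have hFz : Tendsto (fun n => F (x n)) atTop (𝓝 (F z)) := (hF.tendsto z).comp hz
  have hFle : ∀ n, F z ≤ F (x n) := hFanti.le_of_tendsto hFz
  refine ⟨z, hFle 0, fun u => ?_⟩
  by_contra! hu
  have hhx : Tendsto (fun n => h ‖x n‖) atTop (𝓝 (h ‖z‖)) :=
    (hcont ‖z‖ (norm_nonneg z)).tendsto.comp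
      (tendsto_nhdsWithin_iff.2 ⟨hz.norm, Eventually.of_forall fun n => norm_nonneg (x n)⟩)
  have hlim : Tendsto (fun n => F (x n) - ε / (1 + h ‖x n‖) * ‖u - x n‖) atTop
      (𝓝 (F z - ε / (1 + h ‖z‖) * ‖u - z‖)) := by
    refine hFz.sub (Tendsto.mul (tendsto_const_nhds.div (hhx.const_add 1) ?_)
      (tendsto_const_nhds.sub hz).norm)
    linarith [hnonneg ‖z‖ (norm_nonneg z)]
  have hle : F z ≤ (F z + F u) / 2 := by
    refine ge_of_tendsto ((hFz.add_const (F u)).div_const 2) ?_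
    filter_upwards [hlim.eventually (lt_mem_nhds hu)] with n hn
    have := hstepF (x n) u hn.le
    rw [← hx] at this
    exact (hFle _).trans this
  have := mul_nonneg (hw z) (norm_nonneg (u - z))
  linarith

end Ekeland

/-! ### Surjectivity -/

lemma lipNear_half_sq {X Y : Type*} [NormedAddCommGroup X] [NormedSpace ℝ X]
    [NormedAddCommGroup Y] [NormedSpace ℝ Y] {f : X → Y} (hf : ContDiff ℝ 1 f) (y : Y) (x : X) :
    ∃ K, LipNear (fun u => (1/2 : ℝ) * ‖f u - y‖ ^ 2) K x := by
  obtain ⟨K, t, ht, hK⟩ := hf.contDiffAt.exists_lipschitzOnWith (x := x)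
  have hb : ∀ᶠ u in 𝓝 x, ‖f u - y‖ < ‖f x - y‖ + 1 :=
    (hf.continuous.sub continuous_const).norm.continuousAt.eventually (gt_mem_nhds (by simp))
  refine ⟨(‖f x - y‖ + 1) * K, _, inter_mem ht hb, ?_⟩
  rintro a ⟨hat, ha⟩ b ⟨hbt, hb⟩
  have ha : ‖f a - y‖ < ‖f x - y‖ + 1 := ha
  have hb : ‖f b - y‖ < ‖f x - y‖ + 1 := hb
  have h1 : |‖f a - y‖ - ‖f b - y‖| ≤ K * ‖a - b‖ := by
    refine (abs_norm_sub_norm_le _ _).trans ?_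
    rw [sub_sub_sub_cancel_right]
    exact hK.norm_sub_le hat hbt
  have e : (1/2 : ℝ) * ‖f a - y‖ ^ 2 - (1/2 : ℝ) * ‖f b - y‖ ^ 2
      = (1/2) * (‖f a - y‖ + ‖f b - y‖) * (‖f a - y‖ - ‖f b - y‖) := by ring
  rw [e, abs_mul, abs_of_nonneg (by positivity), mul_assoc (‖f x - y‖ + 1)]
  exact mul_le_mul (by linarith) h1 (abs_nonneg _) (by positivity)

theorem surjectivity_criterion {X Y : Type*} [NormedAddCommGroup X] [NormedSpace ℝ X] [CompleteSpace X]
    [NormedAddCommGroup Y] [NormedSpace ℝ Y] [CompleteSpace Y]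
    (f : X → Y) (f' : X → X ≃L[ℝ] Y)
    (hC1 : ContDiff ℝ 1 f)
    (hdf : ∀ x : X, HasFDerivAt f (f' x : X →L[ℝ] Y) x)
    (h : ℝ → ℝ)
    (hcont : ContinuousOn h (Set.Ici 0))
    (hmono : MonotoneOn h (Set.Ici 0))
    (hnonneg : ∀ t ∈ Set.Ici (0:ℝ), 0 ≤ h t)
    (hint : ∫⁻ ρ in Set.Ioi (0:ℝ), ENNReal.ofReal (1 / (1 + h ρ)) = ⊤)
    (hddag : ∀ y : Y, ∀ x : ℕ → X,
      Filter.Tendsto (fun n => (1/2 : ℝ) * ‖f (x n) - y‖ ^ 2) Filter.atTop (nhds 0) →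
      Filter.Tendsto
        (fun n => lambdaF (fun u => (1/2 : ℝ) * ‖f u - y‖ ^ 2) (x n) * (1 + h ‖x n‖))
        Filter.atTop (nhds 0) →
      ∃ (z : X) (φ : ℕ → ℕ), StrictMono φ ∧
        Filter.Tendsto (fun n => x (φ n)) Filter.atTop (nhds z)) :
    Function.Surjective f := by
  have hopen : IsOpen (range f) := by
    refine (isOpenMap_of_hasStrictFDerivAt_equiv (f' := f') fun x => ?_).isOpen_range
    exact hC1.contDiffAt.hasStrictFDerivAt' (hdf x) one_ne_zero
  have hclosed : IsClosed (range f) := by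
    refine isClosed_of_closure_subset fun y hy => ?_
    set F : X → ℝ := fun u => (1/2 : ℝ) * ‖f u - y‖ ^ 2 with hFdef
    have hFc : Continuous F :=
      continuous_const.mul ((hC1.continuous.sub continuous_const).norm.pow 2)
    have hF0 : ∀ x, 0 ≤ F x := fun x => by positivity
    have hinf : ∀ δ > 0, ∃ x, F x < δ := by
      have hc : ContinuousAt (fun v : Y => (1/2 : ℝ) * ‖v - y‖ ^ 2) y := by fun_prop
      intro δ hδ
      obtain ⟨_, hv, x, rfl⟩ :=
        mem_closure_iff_nhds.1 hy _ (hc.eventually (gt_mem_nhds (show _ < δ by simpa using hδ)))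
      exact ⟨x, hv⟩
    have hseq : ∀ n : ℕ, ∃ z, F z ≤ 1 / ((n : ℝ) + 1) ∧
        lambdaF F z * (1 + h ‖z‖) ≤ 1 / ((n : ℝ) + 1) := by
      intro n
      have hε : (0 : ℝ) < 1 / ((n : ℝ) + 1) := by positivity
      obtain ⟨x₀, hx₀⟩ := hinf _ hε
      obtain ⟨z, hz, hslope⟩ :=
        exists_weighted_ekeland hcont hmono hnonneg hint hFc hF0 hε x₀
      obtain ⟨K, hK⟩ := lipNear_half_sq hC1 y z
      have hh := hnonneg ‖z‖ (norm_nonneg z)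
      have hp : 0 < 1 + h ‖z‖ := by linarith
      exact ⟨z, hz.trans hx₀.le,
        (le_div_iff₀ hp).1 (lambdaF_le_of_slope hK (div_pos hε hp).le hslope)⟩
    choose x hxF hxl using hseq
    have hlimF : Tendsto (fun n => F (x n)) atTop (𝓝 0) :=
      squeeze_zero (fun n => hF0 _) hxF tendsto_one_div_add_atTop_nhds_zero_nat
    obtain ⟨z, φ, hφ, hz⟩ := hddag y x hlimF
      (squeeze_zero (fun n => mul_nonneg (lambdaF_nonneg _ _)
        (by linarith [hnonneg ‖x n‖ (norm_nonneg _)])) hxl tendsto_one_div_add_atTop_nhds_zero_nat)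
    have hFz : F z = 0 :=
      tendsto_nhds_unique ((hFc.tendsto z).comp hz) (hlimF.comp hφ.tendsto_atTop)
    refine ⟨z, ?_⟩
    simpa [hFdef, sub_eq_zero] using hFz
  exact range_eq_univ.1 (IsClopen.eq_univ ⟨hclosed, hopen⟩ (range_nonempty f))
end
end

section
/- Let X and Y be real Banach spaces and let f : X → Y be a local C¹-diffeomorphism satisfying the Hadamard integral condition ∫₀^∞ inf_{‖x‖≤ρ} ‖df(x)^{-1}‖^{-1} dρ = ∞. Then there exists a continuous nondecreasing function h : [0,∞) → [0,∞) with ∫₀^∞ dρ/(1+h(ρ)) = ∞ such that for every y ∈ Y the functional F_y(x) = ½‖f(x) − y‖² satisfies the weighted Chang Palais–Smale condition for h; consequently f is a norm-coercive C¹-diffeomorphism of X onto Y. -/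
/-!
Write `m(ρ) = inf_{‖x‖ ≤ ρ} ‖df(x)⁻¹‖⁻¹`, a nonincreasing function with `∫₀^∞ m = ∞`, hence positive.

*Global inversion* (`exists_homeomorph`). Segments issuing from `f 0` are lifted through the local
homeomorphism `f`, starting at the origin. A lift `γ` of `t ↦ f 0 + t v` satisfies
`γ' = df(γ)⁻¹ v`, so `∫₀^‖γ t‖ m ≤ t ‖v‖`; since `∫ m` diverges, `γ` stays in a ball, is Lipschitz
there, and therefore continues up to `t = 1`. The endpoints of the lifts depend continuously on the
target point, giving a continuous section of `f`, which is a two-sided inverse by uniqueness of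
lifts on the connected space `X`. The same estimate reads `∫₀^‖x‖ m ≤ ‖f x - f 0‖`, which is
norm-coercivity; smoothness of the inverse is the inverse function theorem.

*Palais–Smale condition.* Testing Clarke subgradients of `F_y = ½‖f - y‖²` against the direction
`-df(x)⁻¹(f x - y)` gives `λ_{F_y}(x) ≥ m(‖x‖) ‖f x - y‖` (`norm_mul_le_lambdaF`). A weight `h` with
`m · (1 + h) ≥ m 0` and `∫ 1/(1+h) = ∞` is obtained by averaging `m` over unit intervals
(`exists_weight`). Hence a Palais–Smale sequence satisfies `f (x n) → y`, and it converges because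
`f` is a homeomorphism.
-/

open Filter Topology Set

noncomputable section

/-! ### The Clarke gradient of the squared distance -/

section Clarke

variable {X Y : Type*} [NormedAddCommGroup X] [NormedSpace ℝ X]
  [NormedAddCommGroup Y] [NormedSpace ℝ Y]

/-- Strict differentiability gives convergence of difference quotients whose base point moves, which
is the form in which they occur in the Clarke derivative. -/
lemma tendsto_moving_quotient {f : X → Y} {A : X →L[ℝ] Y} {x : X}
    (hf : HasStrictFDerivAt f A x) (u : X) :
    Tendsto (fun p : X × ℝ => p.2⁻¹ • (f (x + p.1 + p.2 • u) - f (x + p.1)))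
      (𝓝 (0 : X) ×ˢ 𝓝[>] (0 : ℝ)) (𝓝 (A u)) := by
  have hle : 𝓝 (0 : X) ×ˢ 𝓝[>] (0 : ℝ) ≤ 𝓝 ((0 : X), (0 : ℝ)) := by
    rw [nhds_prod_eq]
    exact Filter.prod_mono le_rfl nhdsWithin_le_nhds
  have hc : Continuous fun p : X × ℝ => (x + p.1 + p.2 • u, x + p.1) := by fun_prop
  have ht : Tendsto (fun p : X × ℝ => (x + p.1 + p.2 • u, x + p.1))
      (𝓝 (0 : X) ×ˢ 𝓝[>] (0 : ℝ)) (𝓝 (x, x)) := by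
    have := (hc.tendsto ((0 : X), (0 : ℝ))).mono_left hle
    simpa using this
  have h1 := hf.isLittleO.comp_tendsto ht
  have h2 : (fun p : X × ℝ => f (x + p.1 + p.2 • u) - f (x + p.1) - A (p.2 • u))
      =o[𝓝 (0 : X) ×ˢ 𝓝[>] (0 : ℝ)] fun p => p.2 := by
    have h3 : (fun p : X × ℝ => p.2 • u) =O[𝓝 (0 : X) ×ˢ 𝓝[>] (0 : ℝ)] fun p => p.2 := by
      refine Asymptotics.IsBigO.of_bound ‖u‖ (Eventually.of_forall fun p => ?_)
      rw [norm_smul, mul_comm]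
    refine (Asymptotics.IsLittleO.congr' h1 ?_ ?_).trans_isBigO h3
    · exact Eventually.of_forall fun p => by simp
    · exact Eventually.of_forall fun p => by simp
  have h4 := h2.tendsto_inv_smul_nhds_zero.add_const (A u)
  rw [zero_add] at h4
  refine h4.congr' ?_
  have hpos : ∀ᶠ p : X × ℝ in 𝓝 (0 : X) ×ˢ 𝓝[>] (0 : ℝ), 0 < p.2 :=
    tendsto_snd.eventually self_mem_nhdsWithin
  filter_upwards [hpos] with p hp
  rw [map_smul, smul_sub, inv_smul_smul₀ hp.ne']
  abel

/-- The difference quotients of the squared distance are bounded near the base point, so that the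
real-valued `limsup` in the Clarke derivative is the genuine one. -/
lemma eventually_abs_quotient_le {f : X → Y} {A : X →L[ℝ] Y} {x : X}
    (hf : HasStrictFDerivAt f A x) (y : Y) (u : X) :
    ∃ C : ℝ, ∀ᶠ p : X × ℝ in 𝓝 (0 : X) ×ˢ 𝓝[>] (0 : ℝ),
      |((1/2 : ℝ) * ‖f (x + p.1 + p.2 • u) - y‖ ^ 2 - (1/2 : ℝ) * ‖f (x + p.1) - y‖ ^ 2) / p.2|
        ≤ C := by
  have hle : 𝓝 (0 : X) ×ˢ 𝓝[>] (0 : ℝ) ≤ 𝓝 ((0 : X), (0 : ℝ)) := by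
    rw [nhds_prod_eq]
    exact Filter.prod_mono le_rfl nhdsWithin_le_nhds
  have hD := tendsto_moving_quotient hf u
  have hfc : ContinuousAt f x := hf.continuousAt
  have ha : Tendsto (fun p : X × ℝ => f (x + p.1)) (𝓝 (0 : X) ×ˢ 𝓝[>] (0 : ℝ)) (𝓝 (f x)) := by
    refine hfc.tendsto.comp ?_
    have hc : Continuous fun p : X × ℝ => x + p.1 := by fun_prop
    simpa using (hc.tendsto ((0 : X), (0 : ℝ))).mono_left hle
  have hb : Tendsto (fun p : X × ℝ => f (x + p.1 + p.2 • u))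
      (𝓝 (0 : X) ×ˢ 𝓝[>] (0 : ℝ)) (𝓝 (f x)) := by
    refine hfc.tendsto.comp ?_
    have hc : Continuous fun p : X × ℝ => x + p.1 + p.2 • u := by fun_prop
    simpa using (hc.tendsto ((0 : X), (0 : ℝ))).mono_left hle
  have hlim := (hD.norm.mul (((hb.sub_const y).norm.add (ha.sub_const y).norm).const_mul (1/2)))
  refine ⟨‖A u‖ * (1 / 2 * (‖f x - y‖ + ‖f x - y‖)) + 1, ?_⟩
  have hev := hlim.eventually (gt_mem_nhds (lt_add_one _))
  have hpos : ∀ᶠ p : X × ℝ in 𝓝 (0 : X) ×ˢ 𝓝[>] (0 : ℝ), 0 < p.2 :=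
    tendsto_snd.eventually self_mem_nhdsWithin
  filter_upwards [hev, hpos] with p hp h0
  refine le_trans ?_ hp.le
  have e1 : f (x + p.1 + p.2 • u) - f (x + p.1)
      = (f (x + p.1 + p.2 • u) - y) - (f (x + p.1) - y) := by abel
  rw [e1, norm_smul, norm_inv, Real.norm_of_nonneg h0.le, abs_div, abs_of_pos h0,
    div_eq_inv_mul, mul_assoc]
  refine mul_le_mul_of_nonneg_left ?_ (inv_nonneg.2 h0.le)
  have e2 := abs_norm_sub_norm_le (f (x + p.1 + p.2 • u) - y) (f (x + p.1) - y)
  set a := ‖f (x + p.1 + p.2 • u) - y‖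
  set b := ‖f (x + p.1) - y‖
  have ha0 : 0 ≤ a := norm_nonneg _
  have hb0 : 0 ≤ b := norm_nonneg _
  have e3 : (1/2 : ℝ) * a ^ 2 - 1/2 * b ^ 2 = (a - b) * (1/2 * (a + b)) := by ring
  rw [e3, abs_mul, abs_of_nonneg (by positivity : 0 ≤ 1/2 * (a + b))]
  exact mul_le_mul_of_nonneg_right e2 (by positivity)

/-- If `g` is a norming functional of `f x - y`, then `‖f x - y‖ • (g ∘ A)` is a Clarke subgradient
of the squared distance. Only the quotients based at `x` itself are needed. -/
lemma clarkeSubdiff_nonempty {f : X → Y} {A : X →L[ℝ] Y} {x : X}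
    (hf : HasStrictFDerivAt f A x) (y : Y) :
    (clarkeSubdiff (fun u => (1/2 : ℝ) * ‖f u - y‖ ^ 2) x).Nonempty := by
  obtain ⟨g, hg1, hgb⟩ := exists_dual_vector'' ℝ (f x - y)
  simp only [RCLike.ofReal_real_eq_id, id] at hgb
  refine ⟨‖f x - y‖ • g.comp A, fun u => ?_⟩
  obtain ⟨C, hC⟩ := eventually_abs_quotient_le hf y u
  have hbdd : IsBoundedUnder (· ≤ ·) (𝓝 (0 : X) ×ˢ 𝓝[>] (0 : ℝ)) fun p : X × ℝ =>
      ((1/2 : ℝ) * ‖f (x + p.1 + p.2 • u) - y‖ ^ 2 - (1/2 : ℝ) * ‖f (x + p.1) - y‖ ^ 2) / p.2 :=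
    isBoundedUnder_of_eventually_le (hC.mono fun p hp => (abs_le.1 hp).2)
  refine le_of_forall_lt fun c hc => lt_of_lt_of_le (b := (c + (‖f x - y‖ • g.comp A) u) / 2)
    (by linarith) ?_
  refine le_limsup_of_frequently_le ?_ hbdd
  have hι : Tendsto (fun t : ℝ => ((0 : X), t)) (𝓝[>] (0 : ℝ)) (𝓝 (0 : X) ×ˢ 𝓝[>] (0 : ℝ)) :=
    tendsto_const_nhds.prodMk tendsto_id
  refine hι.frequently (Eventually.frequently ?_)
  have hD := (tendsto_moving_quotient hf u).comp hι
  have hlim := ((g.continuous.tendsto _).comp hD).const_mul ‖f x - y‖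
  have hev := hlim.eventually (lt_mem_nhds
    (show (c + (‖f x - y‖ • g.comp A) u) / 2 < ‖f x - y‖ * g (A u) by
      have : (‖f x - y‖ • g.comp A) u = ‖f x - y‖ * g (A u) := by simp
      rw [this] at hc ⊢
      linarith))
  filter_upwards [hev, self_mem_nhdsWithin] with t ht ht0
  refine ht.le.trans ?_
  have ht0 : 0 < t := ht0
  simp only [Function.comp_apply, add_zero, map_smul, map_sub, smul_eq_mul]
  rw [le_div_iff₀ ht0]
  have e1 : ‖f x - y‖ * (t⁻¹ * (g (f (x + t • u)) - g (f x))) * t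
      = ‖f x - y‖ * (g (f (x + t • u) - y) - g (f x - y)) := by
    rw [map_sub, map_sub]
    field_simp
    ring
  rw [e1, hgb]
  have e2 : g (f (x + t • u) - y) ≤ ‖f (x + t • u) - y‖ :=
    (le_abs_self _).trans ((g.le_of_opNorm_le hg1 _).trans_eq (one_mul _))
  nlinarith [sq_nonneg (‖f (x + t • u) - y‖ - ‖f x - y‖), norm_nonneg (f x - y)]

/-- Along a direction that `A` sends to `-(f x - y)`, the squared distance decreases at rate
`‖f x - y‖ ^ 2` in the Clarke sense. -/
lemma clarkeDeriv_le_neg_sq {f : X → Y} {A : X →L[ℝ] Y} {x : X}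
    (hf : HasStrictFDerivAt f A x) (y : Y) (u : X) (hu : A u = -(f x - y)) :
    clarkeDeriv (fun u => (1/2 : ℝ) * ‖f u - y‖ ^ 2) x u ≤ -‖f x - y‖ ^ 2 := by
  obtain ⟨C, hC⟩ := eventually_abs_quotient_le hf y u
  have hcob : IsCoboundedUnder (· ≤ ·) (𝓝 (0 : X) ×ˢ 𝓝[>] (0 : ℝ)) fun p : X × ℝ =>
      ((1/2 : ℝ) * ‖f (x + p.1 + p.2 • u) - y‖ ^ 2 - (1/2 : ℝ) * ‖f (x + p.1) - y‖ ^ 2) / p.2 :=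
    (isBoundedUnder_of_eventually_ge (hC.mono fun p hp => (abs_le.1 hp).1)).isCoboundedUnder_le
  have hle : 𝓝 (0 : X) ×ˢ 𝓝[>] (0 : ℝ) ≤ 𝓝 ((0 : X), (0 : ℝ)) := by
    rw [nhds_prod_eq]
    exact Filter.prod_mono le_rfl nhdsWithin_le_nhds
  have hD := tendsto_moving_quotient hf u
  have hfc : ContinuousAt f x := hf.continuousAt
  have ha : Tendsto (fun p : X × ℝ => f (x + p.1)) (𝓝 (0 : X) ×ˢ 𝓝[>] (0 : ℝ)) (𝓝 (f x)) := by
    refine hfc.tendsto.comp ?_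
    have hc : Continuous fun p : X × ℝ => x + p.1 := by fun_prop
    simpa using (hc.tendsto ((0 : X), (0 : ℝ))).mono_left hle
  have hb : Tendsto (fun p : X × ℝ => f (x + p.1 + p.2 • u))
      (𝓝 (0 : X) ×ˢ 𝓝[>] (0 : ℝ)) (𝓝 (f x)) := by
    refine hfc.tendsto.comp ?_
    have hc : Continuous fun p : X × ℝ => x + p.1 + p.2 • u := by fun_prop
    simpa using (hc.tendsto ((0 : X), (0 : ℝ))).mono_left hle
  have hlim := ((ha.sub_const y).norm.neg.add (hD.add (ha.sub_const y)).norm).mul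
    (((hb.sub_const y).norm.add (ha.sub_const y).norm).const_mul (1/2 : ℝ))
  have hval : (-‖f x - y‖ + ‖A u + (f x - y)‖) * (1/2 * (‖f x - y‖ + ‖f x - y‖))
      = -‖f x - y‖ ^ 2 := by
    rw [hu, neg_add_cancel, norm_zero]
    ring
  rw [hval] at hlim
  refine le_of_forall_gt fun c hc => lt_of_le_of_lt (b := (c + -‖f x - y‖ ^ 2) / 2) ?_
    (by linarith)
  refine limsup_le_of_le hcob ?_
  have hev := hlim.eventually (gt_mem_nhds
    (show -‖f x - y‖ ^ 2 < (c + -‖f x - y‖ ^ 2) / 2 by linarith))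
  have hpos : ∀ᶠ p : X × ℝ in 𝓝 (0 : X) ×ˢ 𝓝[>] (0 : ℝ), p.2 ∈ Ioo (0 : ℝ) 1 :=
    tendsto_snd.eventually (Ioo_mem_nhdsGT one_pos)
  filter_upwards [hev, hpos] with p hp ht
  refine le_trans ?_ hp.le
  obtain ⟨ht0, ht1⟩ := ht
  rw [div_le_iff₀ ht0]
  set t := p.2
  set a := f (x + p.1) - y with ha_def
  set b := f (x + p.1 + t • u) - y with hb_def
  have e1 : f (x + p.1 + t • u) - f (x + p.1) = b - a := by rw [ha_def, hb_def]; abel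
  rw [e1]
  -- `b` is the convex combination of `0` and `a` perturbed by the error `t (D + a)`.
  have e2 : b = (1 - t) • a + t • (t⁻¹ • (b - a) + a) := by
    rw [smul_add, smul_inv_smul₀ ht0.ne', sub_smul, one_smul]
    abel
  have e3 : ‖b‖ ≤ (1 - t) * ‖a‖ + t * ‖t⁻¹ • (b - a) + a‖ := by
    calc ‖b‖ = ‖(1 - t) • a + t • (t⁻¹ • (b - a) + a)‖ := congrArg _ e2
      _ ≤ _ := by
        refine (norm_add_le _ _).trans_eq ?_
        rw [norm_smul, norm_smul, Real.norm_of_nonneg ht0.le,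
          Real.norm_of_nonneg (by linarith : 0 ≤ 1 - t)]
  have hs : 0 ≤ 1/2 * (‖b‖ + ‖a‖) := by positivity
  nlinarith [mul_le_mul_of_nonneg_right e3 hs]

lemma norm_mul_le_lambdaF {f : X → Y} {A : X ≃L[ℝ] Y} {x : X}
    (hf : HasStrictFDerivAt f (A : X →L[ℝ] Y) x) (y : Y) :
    ‖(A.symm : Y →L[ℝ] X)‖⁻¹ * ‖f x - y‖ ≤ lambdaF (fun u => (1/2 : ℝ) * ‖f u - y‖ ^ 2) x := by
  refine le_csInf ((clarkeSubdiff_nonempty hf y).image _) ?_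
  rintro _ ⟨w, hw, rfl⟩
  have h1 := (hw (A.symm (-(f x - y)))).trans
    (clarkeDeriv_le_neg_sq hf y (A.symm (-(f x - y))) (by simp))
  have h2 : ‖w (A.symm (-(f x - y)))‖ ≤ ‖w‖ * (‖(A.symm : Y →L[ℝ] X)‖ * ‖f x - y‖) := by
    refine (w.le_opNorm _).trans (mul_le_mul_of_nonneg_left ?_ (norm_nonneg _))
    simpa [norm_sub_rev] using (A.symm : Y →L[ℝ] X).le_opNorm (-(f x - y))
  have h3 := (abs_le.1 h2).1
  rcases (norm_nonneg (f x - y)).eq_or_lt with h0 | h0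
  · rw [← h0, mul_zero]
    exact norm_nonneg _
  have h4 : ‖f x - y‖ ≤ ‖w‖ * ‖(A.symm : Y →L[ℝ] X)‖ := by
    refine le_of_mul_le_mul_right ?_ h0
    nlinarith
  have h5 : 0 < ‖(A.symm : Y →L[ℝ] X)‖ := by
    rcases (norm_nonneg (A.symm : Y →L[ℝ] X)).eq_or_lt with h | h
    · rw [← h, mul_zero] at h4
      linarith
    · exact h
  show _ ≤ ‖w‖
  rw [inv_mul_le_iff₀ h5, mul_comm]
  exact h4

end Clarke

/-! ### Nonincreasing functions with divergent integral -/

section Modulus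

open MeasureTheory

variable {m : ℝ → ℝ}

lemma integral_le_of_antitone_s11 (hm : Antitone m) {a b : ℝ} (hab : a ≤ b) :
    ∫ s in a..b, m s ≤ m a * (b - a) := by
  have h := intervalIntegral.integral_mono_on hab (hm.intervalIntegrable (μ := volume))
    intervalIntegrable_const (fun s hs => hm hs.1)
  rw [intervalIntegral.integral_const, smul_eq_mul, mul_comm] at h
  exact h

lemma le_integral_of_antitone (hm : Antitone m) {a b : ℝ} (hab : a ≤ b) :
    m b * (b - a) ≤ ∫ s in a..b, m s := by
  have h := intervalIntegral.integral_mono_on hab intervalIntegrable_const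
    (hm.intervalIntegrable (μ := volume)) (fun s hs => hm hs.2)
  rw [intervalIntegral.integral_const, smul_eq_mul, mul_comm] at h
  exact h

lemma continuous_integral_of_antitone (hm : Antitone m) :
    Continuous fun r : ℝ => ∫ s in (0 : ℝ)..r, m s :=
  intervalIntegral.continuous_primitive (fun _ _ => hm.intervalIntegrable) 0

lemma monotone_integral (hm : Antitone m) (h0 : ∀ r, 0 ≤ m r) :
    Monotone fun r : ℝ => ∫ s in (0 : ℝ)..r, m s := by
  intro a b hab
  have h1 : ∫ s in a..b, m s = (∫ s in (0 : ℝ)..b, m s) - ∫ s in (0 : ℝ)..a, m s :=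
    (intervalIntegral.integral_interval_sub_left hm.intervalIntegrable hm.intervalIntegrable).symm
  have h2 : 0 ≤ ∫ s in a..b, m s := intervalIntegral.integral_nonneg hab fun s _ => h0 s
  show (∫ s in (0 : ℝ)..a, m s) ≤ ∫ s in (0 : ℝ)..b, m s
  linarith

lemma exists_lt_integral (hm : Antitone m) (h0 : ∀ r, 0 ≤ m r)
    (htop : ∫⁻ r in Ioi (0 : ℝ), ENNReal.ofReal (m r) = ⊤) (C : ℝ) :
    ∃ R : ℝ, 0 ≤ R ∧ C < ∫ s in (0 : ℝ)..R, m s := by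
  by_contra! hcon
  have hmint : IntegrableOn m (Ioi 0) := by
    refine integrableOn_Ioi_of_intervalIntegral_norm_bounded (l := atTop) (b := id) C 0
      (fun i => ?_) tendsto_id ?_
    · rcases le_total 0 i with hi | hi
      · exact (intervalIntegrable_iff_integrableOn_Ioc_of_le hi).1 hm.intervalIntegrable
      · simp [Ioc_eq_empty_of_le hi]
    · filter_upwards [eventually_ge_atTop 0] with R hR
      simpa [abs_of_nonneg (h0 _)] using hcon R hR
  exact hmint.lintegral_lt_top.ne htop

lemma pos_of_lintegral_eq_top (hm : Antitone m) (h0 : ∀ r, 0 ≤ m r)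
    (htop : ∫⁻ r in Ioi (0 : ℝ), ENNReal.ofReal (m r) = ⊤) (r : ℝ) : 0 < m r := by
  by_contra! hr
  obtain ⟨R, hR0, hR⟩ := exists_lt_integral hm h0 htop (∫ s in (0 : ℝ)..(max r 0), m s)
  rcases le_total R (max r 0) with h | h
  · exact absurd (monotone_integral hm h0 h) (not_le.2 hR)
  · have h1 := integral_le_of_antitone_s11 hm h
    have h2 := intervalIntegral.integral_add_adjacent_intervals
      (hm.intervalIntegrable (μ := volume) (a := 0) (b := max r 0))
      (hm.intervalIntegrable (μ := volume) (a := max r 0) (b := R))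
    have h3 : m (max r 0) ≤ 0 := (hm (le_max_left _ _)).trans hr
    nlinarith

/-- A nonnegative nonincreasing `m` with divergent integral admits a continuous nondecreasing weight
`h ≥ 0`, still with divergent `∫ 1 / (1 + h)`, and with `1 + h ≥ m 0 / m`: one takes
`1 / (1 + h(r))` to be the average of `m` over `[r, r + 1]`, divided by `m 0`. -/
lemma exists_weight (hm : Antitone m) (h0 : ∀ r, 0 ≤ m r)
    (htop : ∫⁻ r in Ioi (0 : ℝ), ENNReal.ofReal (m r) = ⊤) :
    ∃ h : ℝ → ℝ, ContinuousOn h (Ici 0) ∧ MonotoneOn h (Ici 0) ∧ (∀ t ∈ Ici (0 : ℝ), 0 ≤ h t) ∧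
      (∫⁻ r in Ioi (0 : ℝ), ENNReal.ofReal (1 / (1 + h r)) = ⊤) ∧
      ∀ r, m 0 ≤ m r * (1 + h r) := by
  have hpos := pos_of_lintegral_eq_top hm h0 htop
  set k : ℝ → ℝ := fun r => ∫ s in r..(r + 1), m s with hk
  have k_le : ∀ r, k r ≤ m r := fun r => by
    simpa using integral_le_of_antitone_s11 hm (show r ≤ r + 1 by linarith)
  have le_k : ∀ r, m (r + 1) ≤ k r := fun r => by
    simpa using le_integral_of_antitone hm (show r ≤ r + 1 by linarith)
  have k_pos : ∀ r, 0 < k r := fun r => (hpos _).trans_le (le_k r)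
  have k_anti : Antitone k := by
    intro a b hab
    have e : ∀ r, k r = ∫ s in (0 : ℝ)..1, m (s + r) := fun r => by
      rw [intervalIntegral.integral_comp_add_right]
      simp [hk, add_comm]
    rw [e, e]
    have hsh : ∀ r, Antitone fun s => m (s + r) := fun r s s' hs => hm (by linarith)
    exact intervalIntegral.integral_mono_on zero_le_one (hsh b).intervalIntegrable
      (hsh a).intervalIntegrable fun s _ => hm (by linarith)
  have k_cont : Continuous k := by
    have e : k = fun r => (∫ s in (0 : ℝ)..(r + 1), m s) - ∫ s in (0 : ℝ)..r, m s := by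
      funext r
      exact (intervalIntegral.integral_interval_sub_left hm.intervalIntegrable
        hm.intervalIntegrable).symm
    rw [e]
    exact ((continuous_integral_of_antitone hm).comp (continuous_add_const 1)).sub
      (continuous_integral_of_antitone hm)
  have one_add : ∀ r, 1 + (m 0 / k r - 1) = m 0 / k r := fun r => by ring
  refine ⟨fun r => m 0 / k r - 1, ?_, ?_, ?_, ?_, ?_⟩
  · exact ((continuous_const.div k_cont fun r => (k_pos r).ne').sub continuous_const).continuousOn
  · intro a _ b _ hab
    exact sub_le_sub_right (div_le_div_of_nonneg_left (h0 0) (k_pos b) (k_anti hab)) 1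
  · intro t ht
    rw [sub_nonneg, one_le_div (k_pos t)]
    exact (k_le t).trans (hm ht)
  · have hshift : ∫⁻ r in Ioi (0 : ℝ), ENNReal.ofReal (k r) = ⊤ := by
      by_contra hne
      -- `m r ≤ k (r - 1)`, so a finite integral of `k` bounds that of `m` over `(1, ∞)`.
      have hkint : IntegrableOn k (Ioi 0) := by
        refine ⟨k_cont.aestronglyMeasurable, ?_⟩
        rw [hasFiniteIntegral_iff_ofReal (Eventually.of_forall fun r => (k_pos r).le)]
        exact lt_top_iff_ne_top.2 hne
      obtain ⟨R, hR0, hR⟩ := exists_lt_integral hm h0 htop (m 0 + ∫ r in Ioi (0 : ℝ), k r)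
      have h1 : ∫ s in (0 : ℝ)..(R + 1), m s
          = (∫ s in (0 : ℝ)..1, m s) + ∫ s in (1 : ℝ)..(R + 1), m s :=
        (intervalIntegral.integral_add_adjacent_intervals hm.intervalIntegrable
          hm.intervalIntegrable).symm
      have h2 : ∫ s in (0 : ℝ)..1, m s ≤ m 0 := by
        simpa using integral_le_of_antitone_s11 hm (zero_le_one (α := ℝ))
      have h3 : ∫ s in (1 : ℝ)..(R + 1), m s = ∫ s in (0 : ℝ)..R, m (s + 1) := by
        rw [intervalIntegral.integral_comp_add_right]
        simp
      have hsh : Antitone fun s => m (s + 1) := fun s s' hs => hm (by linarith)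
      have h4 : ∫ s in (0 : ℝ)..R, m (s + 1) ≤ ∫ s in (0 : ℝ)..R, k s :=
        intervalIntegral.integral_mono_on hR0 hsh.intervalIntegrable
          k_anti.intervalIntegrable fun s _ => le_k s
      have h5 : ∫ s in (0 : ℝ)..R, k s ≤ ∫ r in Ioi (0 : ℝ), k r := by
        rw [intervalIntegral.integral_of_le hR0]
        exact setIntegral_mono_set hkint (Eventually.of_forall fun r => (k_pos r).le)
          Ioc_subset_Ioi_self.eventuallyLE
      have h6 := monotone_integral hm h0 (show R ≤ R + 1 by linarith)
      simp only at h6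
      linarith
    have e : ∀ r, ENNReal.ofReal (1 / (1 + (m 0 / k r - 1)))
        = ENNReal.ofReal (m 0)⁻¹ * ENNReal.ofReal (k r) := fun r => by
      rw [one_add, one_div_div, ← ENNReal.ofReal_mul (inv_nonneg.2 (h0 0)), div_eq_inv_mul]
    simp_rw [e]
    rw [lintegral_const_mul' _ _ ENNReal.ofReal_ne_top, hshift, ENNReal.mul_top]
    simpa using hpos 0
  · intro r
    rw [one_add, mul_div_assoc', le_div_iff₀ (k_pos r), mul_comm]
    exact mul_le_mul_of_nonneg_right (k_le r) (h0 0)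

end Modulus

/-! ### Lifting segments and global inversion -/

section Lifting

open MeasureTheory

variable {X Y : Type*} [NormedAddCommGroup X] [NormedAddCommGroup Y] [NormedSpace ℝ Y]

/-- `γ` lifts the segment `t ↦ f 0 + t v`, `0 ≤ t ≤ T`, through `f`, starting at the origin. -/
structure IsSegmentLift (f : X → Y) (v : Y) (T : ℝ) (γ : ℝ → X) : Prop where
  cont : ContinuousOn γ (Icc 0 T)
  zero : γ 0 = 0
  lift : ∀ t ∈ Icc 0 T, f (γ t) = f 0 + t • v

lemma IsSegmentLift.mono {f : X → Y} {v : Y} {T S : ℝ} {γ : ℝ → X}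
    (h : IsSegmentLift f v T γ) (hS : S ≤ T) : IsSegmentLift f v S γ :=
  ⟨h.cont.mono (Icc_subset_Icc_right hS), h.zero, fun t ht => h.lift t ⟨ht.1, ht.2.trans hS⟩⟩

lemma IsSegmentLift.congr {f : X → Y} {v : Y} {T : ℝ} {γ γ' : ℝ → X}
    (h : IsSegmentLift f v T γ) (hT : 0 ≤ T) (heq : EqOn γ' γ (Icc 0 T)) :
    IsSegmentLift f v T γ' :=
  ⟨h.cont.congr heq, (heq ⟨le_rfl, hT⟩).trans h.zero, fun t ht => by rw [heq ht, h.lift t ht]⟩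

lemma IsSegmentLift.unique {f : X → Y} (hloc : IsLocalHomeomorph f) {v : Y} {T : ℝ}
    {γ γ' : ℝ → X} (h : IsSegmentLift f v T γ) (h' : IsSegmentLift f v T γ') :
    EqOn γ γ' (Icc 0 T) := by
  intro t ht
  exact (T2Space.isSeparatedMap f).eqOn_of_comp_eqOn hloc.isLocallyInjective isPreconnected_Icc
    h.cont h'.cont (fun s hs => (h.lift s hs).trans (h'.lift s hs).symm)
    ⟨le_rfl, ht.1.trans ht.2⟩ (h.zero.trans h'.zero.symm) ht

variable [NormedSpace ℝ X] [CompleteSpace X] {f : X → Y} {f' : X → X ≃L[ℝ] Y}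

lemma isLocalHomeomorph_of_strict (hf : ∀ x, HasStrictFDerivAt f (f' x : X →L[ℝ] Y) x) :
    IsLocalHomeomorph f :=
  IsLocalHomeomorph.mk f fun x => ⟨(hf x).toOpenPartialHomeomorph f,
    (hf x).mem_toOpenPartialHomeomorph_source, fun _ _ => rfl⟩

lemma IsSegmentLift.hasDerivWithinAt (hf : ∀ x, HasStrictFDerivAt f (f' x : X →L[ℝ] Y) x)
    {v : Y} {T : ℝ} {γ : ℝ → X} (h : IsSegmentLift f v T γ) {t : ℝ} (ht : t ∈ Icc 0 T) :
    HasDerivWithinAt γ ((f' (γ t)).symm v) (Icc 0 T) t := by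
  have hline : HasDerivWithinAt (fun s : ℝ => f 0 + s • v) v (Icc 0 T) t := by
    simpa using (((hasDerivAt_id t).smul_const v).const_add (f 0)).hasDerivWithinAt
  have hg : HasFDerivAt ((hf (γ t)).localInverse f (f' (γ t)) (γ t))
      ((f' (γ t)).symm : Y →L[ℝ] X) (f 0 + t • v) := by
    rw [← h.lift t ht]
    exact (hf (γ t)).to_localInverse.hasFDerivAt
  have hcomp := hg.comp_hasDerivWithinAt t hline
  have hev : ∀ᶠ s in 𝓝[Icc 0 T] t,
      (hf (γ t)).localInverse f (f' (γ t)) (γ t) (f (γ s)) = γ s :=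
    (h.cont t ht).eventually (hf (γ t)).eventually_left_inverse
  refine hcomp.congr_of_eventuallyEq ?_ ?_
  · filter_upwards [hev, self_mem_nhdsWithin] with s hs hsT
    simp only [Function.comp_apply]
    rw [← h.lift s hsT, hs]
  · simp only [Function.comp_apply]
    rw [← h.lift t ht, (hf (γ t)).localInverse_apply_image]

/-- The a priori estimate behind the Hadamard condition: along a lift,
`t ↦ ∫₀^‖γ t‖ m` has upper right derivative at most `m ‖γ t‖ * ‖γ' t‖ ≤ ‖v‖`. -/
lemma IsSegmentLift.integral_le (hf : ∀ x, HasStrictFDerivAt f (f' x : X →L[ℝ] Y) x)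
    {m : ℝ → ℝ} (hm : Antitone m) (h0 : ∀ r, 0 ≤ m r)
    (hmf : ∀ x, m ‖x‖ * ‖((f' x).symm : Y →L[ℝ] X)‖ ≤ 1)
    {v : Y} {T : ℝ} {γ : ℝ → X} (h : IsSegmentLift f v T γ) {t : ℝ} (ht : t ∈ Icc 0 T) :
    ∫ s in (0 : ℝ)..‖γ t‖, m s ≤ ‖v‖ * t := by
  refine image_le_of_liminf_slope_right_le_deriv_boundary
    (f := fun t => ∫ s in (0 : ℝ)..‖γ t‖, m s) (B := fun t => ‖v‖ * t) (B' := fun _ => ‖v‖)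
    ((continuous_integral_of_antitone hm).comp_continuousOn h.cont.norm) ?_ (by fun_prop) ?_ ?_ ht
  · simp [h.zero]
  · intro x _
    simpa using ((hasDerivAt_id x).const_mul ‖v‖).hasDerivWithinAt
  · intro x hx r hr
    have hder := h.hasDerivWithinAt hf (Ico_subset_Icc_self hx)
    have hder' : HasDerivWithinAt γ ((f' (γ x)).symm v) (Ioi x) x := by
      refine (hder.mono (Ioc_subset_Icc_self.trans
        (Icc_subset_Icc_left hx.1))).mono_of_mem_nhdsWithin (Ioc_mem_nhdsGT hx.2)
    have hsl := (hasDerivWithinAt_iff_tendsto_slope' (self_notMem_Ioi (a := x))).1 hder'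
    have hlim := hsl.norm.const_mul (m ‖γ x‖)
    have hlt : m ‖γ x‖ * ‖(f' (γ x)).symm v‖ < r := by
      refine lt_of_le_of_lt ?_ hr
      calc m ‖γ x‖ * ‖(f' (γ x)).symm v‖
          ≤ m ‖γ x‖ * (‖((f' (γ x)).symm : Y →L[ℝ] X)‖ * ‖v‖) :=
            mul_le_mul_of_nonneg_left (((f' (γ x)).symm : Y →L[ℝ] X).le_opNorm v) (h0 _)
        _ = (m ‖γ x‖ * ‖((f' (γ x)).symm : Y →L[ℝ] X)‖) * ‖v‖ := by ring
        _ ≤ 1 * ‖v‖ := mul_le_mul_of_nonneg_right (hmf _) (norm_nonneg _)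
        _ = ‖v‖ := one_mul _
    refine Eventually.frequently ?_
    filter_upwards [hlim.eventually (gt_mem_nhds hlt), self_mem_nhdsWithin] with z hz hxz
    refine lt_of_le_of_lt ?_ hz
    have hxz : x < z := hxz
    have hpos : 0 < z - x := sub_pos.2 hxz
    rw [slope_def_field, slope_def_module, norm_smul, norm_inv, Real.norm_of_nonneg hpos.le,
      div_le_iff₀ hpos]
    have e1 : ‖γ z‖ ≤ ‖γ x‖ + ‖γ z - γ x‖ := by
      simpa using norm_add_le (γ x) (γ z - γ x)
    have e2 := monotone_integral hm h0 e1
    have e3 := integral_le_of_antitone_s11 hm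
      (show ‖γ x‖ ≤ ‖γ x‖ + ‖γ z - γ x‖ by linarith [norm_nonneg (γ z - γ x)])
    have e4 := intervalIntegral.integral_add_adjacent_intervals
      (hm.intervalIntegrable (μ := volume) (a := 0) (b := ‖γ x‖))
      (hm.intervalIntegrable (μ := volume) (a := ‖γ x‖) (b := ‖γ x‖ + ‖γ z - γ x‖))
    simp only at e2
    have e5 : m ‖γ x‖ * ((z - x)⁻¹ * ‖γ z - γ x‖) * (z - x) = m ‖γ x‖ * ‖γ z - γ x‖ := by
      field_simp
    rw [e5]
    rw [add_sub_cancel_left] at e3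
    linarith

/-- Lifts over subintervals of `[0, 1]` are Lipschitz with a constant depending on `v` only. -/
lemma exists_lipschitz (hf : ∀ x, HasStrictFDerivAt f (f' x : X →L[ℝ] Y) x)
    {m : ℝ → ℝ} (hm : Antitone m) (h0 : ∀ r, 0 ≤ m r)
    (htop : ∫⁻ r in Ioi (0 : ℝ), ENNReal.ofReal (m r) = ⊤)
    (hmf : ∀ x, m ‖x‖ * ‖((f' x).symm : Y →L[ℝ] X)‖ ≤ 1) (v : Y) :
    ∃ K : NNReal, ∀ T ≤ 1, ∀ γ, IsSegmentLift f v T γ → LipschitzOnWith K γ (Icc 0 T) := by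
  obtain ⟨R, -, hR⟩ := exists_lt_integral hm h0 htop ‖v‖
  have hmR := pos_of_lintegral_eq_top hm h0 htop R
  refine ⟨((m R)⁻¹ * ‖v‖).toNNReal, fun T hT γ h => ?_⟩
  refine Convex.lipschitzOnWith_of_nnnorm_hasDerivWithin_le (convex_Icc 0 T)
    (fun t ht => h.hasDerivWithinAt hf ht) fun t ht => ?_
  rw [← NNReal.coe_le_coe, coe_nnnorm, Real.coe_toNNReal _ (by positivity)]
  have hle := h.integral_le hf hm h0 hmf ht
  have hγ : ‖γ t‖ ≤ R := by
    by_contra! hc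
    have h1 := monotone_integral hm h0 hc.le
    simp only at h1
    nlinarith [norm_nonneg v, ht.2]
  have hb : ‖((f' (γ t)).symm : Y →L[ℝ] X)‖ ≤ (m R)⁻¹ := by
    rw [← one_div, le_div_iff₀ hmR, mul_comm]
    exact (mul_le_mul_of_nonneg_right (hm hγ) (norm_nonneg _)).trans (hmf _)
  exact ((f' (γ t)).symm : Y →L[ℝ] X).le_of_opNorm_le hb v

/-- A lift over `[0, T]` extends a little beyond `T` by the local inverse of `f` at its endpoint. -/
lemma IsSegmentLift.extend (hf : ∀ x, HasStrictFDerivAt f (f' x : X →L[ℝ] Y) x)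
    {v : Y} {T : ℝ} (hT : 0 ≤ T) {γ : ℝ → X} (h : IsSegmentLift f v T γ) {S : ℝ} (hS : T < S) :
    ∃ S' ∈ Ioc T S, ∃ γ', IsSegmentLift f v S' γ' := by
  have hTT : T ∈ Icc 0 T := ⟨hT, le_rfl⟩
  set e := (hf (γ T)).toOpenPartialHomeomorph f with he
  have hsrc : γ T ∈ e.source := (hf (γ T)).mem_toOpenPartialHomeomorph_source
  have hline : Continuous fun s : ℝ => f 0 + s • v := by fun_prop
  have hmem : ∀ᶠ s in 𝓝 T, f 0 + s • v ∈ e.target := by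
    refine hline.continuousAt.eventually (e.open_target.mem_nhds ?_)
    show f 0 + T • v ∈ e.target
    rw [← h.lift T hTT]
    exact e.map_source hsrc
  obtain ⟨δ, hδ, hball⟩ := Metric.eventually_nhds_iff.1 hmem
  have hS' : min S (T + δ / 2) ∈ Ioc T S := ⟨lt_min hS (by linarith), min_le_left _ _⟩
  set S' := min S (T + δ / 2)
  have htar : ∀ s ∈ Icc T S', f 0 + s • v ∈ e.target := fun s hs => by
    refine hball ?_
    have : s ≤ T + δ / 2 := hs.2.trans (min_le_right _ _)
    rw [Real.dist_eq, abs_of_nonneg (by linarith [hs.1])]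
    linarith
  have hend : e.symm (f 0 + T • v) = γ T := by
    rw [← h.lift T hTT]
    exact e.left_inv hsrc
  set γ' : ℝ → X := fun s => if s ≤ T then γ s else e.symm (f 0 + s • v)
  have e1 : EqOn γ' γ (Icc 0 T) := fun s hs => if_pos hs.2
  have e2 : EqOn γ' (fun s => e.symm (f 0 + s • v)) (Icc T S') := fun s hs => by
    rcases hs.1.eq_or_lt with h1 | h1
    · rw [← h1]
      exact (if_pos le_rfl).trans hend.symm
    · exact if_neg (not_le.2 h1)
  refine ⟨S', hS', γ', ?_, ?_, ?_⟩
  · rw [← Icc_union_Icc_eq_Icc hT hS'.1.le]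
    refine ContinuousOn.union_of_isClosed (h.cont.congr e1) ?_ isClosed_Icc isClosed_Icc
    refine ContinuousOn.congr ?_ e2
    exact e.continuousOn_symm.comp hline.continuousOn htar
  · exact (e1 ⟨le_rfl, hT⟩).trans h.zero
  · intro s hs
    rcases le_total s T with h1 | h1
    · rw [e1 ⟨hs.1, h1⟩]
      exact h.lift s ⟨hs.1, h1⟩
    · rw [e2 ⟨h1, hs.2⟩]
      exact e.right_inv (htar s ⟨h1, hs.2⟩)

/-- If lifts exist over `[0, t]` for all `t < T`, the uniform Lipschitz bound makes them converge
at `T`, giving a lift over `[0, T]`. -/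
lemma exists_lift_of_forall_lt (hf : ∀ x, HasStrictFDerivAt f (f' x : X →L[ℝ] Y) x)
    {v : Y} {T : ℝ} (hT : 0 < T) {K : NNReal}
    (hK : ∀ t < T, ∀ γ, IsSegmentLift f v t γ → LipschitzOnWith K γ (Icc 0 t))
    (hlt : ∀ t ∈ Ico 0 T, ∃ γ, IsSegmentLift f v t γ) : ∃ γ, IsSegmentLift f v T γ := by
  have hloc := isLocalHomeomorph_of_strict hf
  choose! Γ hΓ using hlt
  -- By uniqueness of lifts the endpoints `Γ t t` form a lift over `[0, T)`.
  set e : ℝ → X := fun t => Γ t t with he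
  have heq : ∀ t ∈ Ico 0 T, EqOn e (Γ t) (Icc 0 t) := fun t ht s hs =>
    (hΓ s ⟨hs.1, hs.2.trans_lt ht.2⟩).unique hloc ((hΓ t ht).mono hs.2) ⟨hs.1, le_rfl⟩
  have hlift : ∀ t ∈ Ico 0 T, IsSegmentLift f v t e := fun t ht =>
    (hΓ t ht).congr ht.1 (heq t ht)
  have hlip : LipschitzOnWith K e (Ico 0 T) := by
    intro a ha b hb
    have hab : max a b ∈ Ico 0 T := ⟨ha.1.trans (le_max_left _ _), max_lt ha.2 hb.2⟩
    exact hK _ hab.2 e (hlift _ hab) ⟨ha.1, le_max_left _ _⟩ ⟨hb.1, le_max_right _ _⟩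
  have hne : (𝓝[Ico 0 T] T).NeBot := by
    rw [← mem_closure_iff_nhdsWithin_neBot, closure_Ico hT.ne]
    exact ⟨hT.le, le_rfl⟩
  have hcau : Cauchy (map e (𝓝[Ico 0 T] T)) :=
    (cauchy_nhds.mono nhdsWithin_le_nhds).map_of_le hlip.uniformContinuousOn
      (le_principal_iff.2 self_mem_nhdsWithin)
  obtain ⟨z, hz⟩ := CompleteSpace.complete hcau
  have hfz : f z = f 0 + T • v := by
    have h1 : Tendsto (fun t => f (e t)) (𝓝[Ico 0 T] T) (𝓝 (f z)) :=
      (hloc.continuous.tendsto z).comp hz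
    have hline : Continuous fun s : ℝ => f 0 + s • v := by fun_prop
    have h2 : Tendsto (fun t : ℝ => f 0 + t • v) (𝓝[Ico 0 T] T) (𝓝 (f 0 + T • v)) :=
      (hline.tendsto T).mono_left nhdsWithin_le_nhds
    refine tendsto_nhds_unique (h1.congr' ?_) h2
    filter_upwards [self_mem_nhdsWithin] with t ht
    exact (hlift t ht).lift t ⟨ht.1, le_rfl⟩
  refine ⟨Function.update e T z, ?_, ?_, ?_⟩
  · rw [continuousOn_update_iff, Icc_sdiff_right]
    exact ⟨hlip.continuousOn, fun _ => hz⟩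
  · rw [Function.update_of_ne hT.ne]
    exact (hlift 0 ⟨le_rfl, hT⟩).zero
  · intro t ht
    rcases ht.2.eq_or_lt with h1 | h1
    · rw [h1, Function.update_self, hfz]
    · rw [Function.update_of_ne h1.ne]
      exact (hlift t ⟨ht.1, h1⟩).lift t ⟨ht.1, le_rfl⟩

lemma exists_segmentLift (hf : ∀ x, HasStrictFDerivAt f (f' x : X →L[ℝ] Y) x)
    {m : ℝ → ℝ} (hm : Antitone m) (h0 : ∀ r, 0 ≤ m r)
    (htop : ∫⁻ r in Ioi (0 : ℝ), ENNReal.ofReal (m r) = ⊤)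
    (hmf : ∀ x, m ‖x‖ * ‖((f' x).symm : Y →L[ℝ] X)‖ ≤ 1) (v : Y) :
    ∃ γ, IsSegmentLift f v 1 γ := by
  obtain ⟨K, hK⟩ := exists_lipschitz hf hm h0 htop hmf v
  set s : Set ℝ := {T | ∃ γ, IsSegmentLift f v T γ} with hs
  have hzero : (0 : ℝ) ∈ s := by
    refine ⟨fun _ => 0, continuousOn_const, rfl, fun t ht => ?_⟩
    rw [le_antisymm ht.2 ht.1, zero_smul, add_zero]
  have hdown : ∀ {a b : ℝ}, a ≤ b → b ∈ s → a ∈ s := fun hab ⟨γ, hγ⟩ => ⟨γ, hγ.mono hab⟩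
  refine IsClosed.Icc_subset_of_forall_exists_gt (a := (0 : ℝ)) (b := 1) (s := s) ?_ hzero ?_
    ⟨zero_le_one, le_rfl⟩
  · refine isClosed_of_closure_subset fun T hT => ?_
    have hT1 : T ∈ Icc (0 : ℝ) 1 := by
      have := closure_mono (inter_subset_right (s := s) (t := Icc (0 : ℝ) 1)) hT
      rwa [isClosed_Icc.closure_eq] at this
    refine ⟨?_, hT1⟩
    rcases hT1.1.eq_or_lt with h1 | h1
    · rwa [← h1]
    refine exists_lift_of_forall_lt hf h1 (K := K) (fun t ht => hK t (ht.le.trans hT1.2)) ?_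
    intro t ht
    obtain ⟨b, hb1, hb2⟩ := mem_closure_iff_nhds.1 hT _ (Ioi_mem_nhds ht.2)
    exact hdown (le_of_lt hb1) hb2.1
  · rintro T ⟨⟨γ, hγ⟩, hT⟩ S hS
    obtain ⟨S₁, hS₁, γ₁, hγ₁⟩ := hγ.extend hf hT.1 hS
    exact ⟨S₁, ⟨γ₁, hγ₁⟩, hS₁⟩

/-- **Hadamard–Lévy–Plastock global inversion**, with the quantitative growth of `f`. The endpoints
of the lifts of all segments issuing from `f 0` form a continuous section `σ` of `f`. Both `σ ∘ f`
and the identity lift `f` through itself and they agree at the origin; since `X` is connected and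
`f` is a local homeomorphism, `σ ∘ f = id`. -/
theorem exists_homeomorph (hf : ∀ x, HasStrictFDerivAt f (f' x : X →L[ℝ] Y) x)
    {m : ℝ → ℝ} (hm : Antitone m) (h0 : ∀ r, 0 ≤ m r)
    (htop : ∫⁻ r in Ioi (0 : ℝ), ENNReal.ofReal (m r) = ⊤)
    (hmf : ∀ x, m ‖x‖ * ‖((f' x).symm : Y →L[ℝ] X)‖ ≤ 1) :
    (∃ e : X ≃ₜ Y, ⇑e = f) ∧ ∀ x, ∫ s in (0 : ℝ)..‖x‖, m s ≤ ‖f x - f 0‖ := by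
  have hloc := isLocalHomeomorph_of_strict hf
  choose Γ hΓ using fun y : Y => exists_segmentLift hf hm h0 htop hmf (y - f 0)
  set H : C(unitInterval × Y, Y) :=
    ⟨fun p => f 0 + (p.1 : ℝ) • (p.2 - f 0), by fun_prop⟩ with hH
  set G : unitInterval × Y → X := fun p => Γ p.2 (p.1 : ℝ) with hG
  have hGlift : f ∘ G = H := by
    funext p
    exact (hΓ p.2).lift p.1 p.1.2
  have hGc : Continuous G := by
    refine hloc.continuous_lift (T2Space.isSeparatedMap f) H hGlift ?_ ?_
    · have : (fun y : Y => G (0, y)) = fun _ => 0 := by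
        funext y
        exact (hΓ y).zero
      rw [this]
      exact continuous_const
    · intro y
      exact (hΓ y).cont.comp_continuous continuous_subtype_val fun t => t.2
  set σ : Y → X := fun y => G (1, y) with hσ
  have hσc : Continuous σ := hGc.comp (by fun_prop)
  have hfσ : ∀ y, f (σ y) = y := fun y => by
    have := congrFun hGlift (1, y)
    simpa [hH] using this
  have hσ0 : σ (f 0) = 0 := by
    -- The constant path lifts the degenerate segment from `f 0` to itself.
    have hconst : IsSegmentLift f (f 0 - f 0) 1 fun _ => 0 :=
      ⟨continuousOn_const, rfl, fun t _ => by simp⟩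
    exact (hΓ (f 0)).unique hloc hconst ⟨zero_le_one, le_rfl⟩
  have hσf : ∀ x, σ (f x) = x := by
    have := (T2Space.isSeparatedMap f).eq_of_comp_eq hloc.isLocallyInjective
      (hσc.comp hloc.continuous) continuous_id (funext fun x => hfσ (f x)) 0 hσ0
    exact fun x => congrFun this x
  refine ⟨⟨⟨⟨f, σ, hσf, hfσ⟩, hloc.continuous, hσc⟩, rfl⟩, fun x => ?_⟩
  have h1 := (hΓ (f x)).integral_le hf hm h0 hmf (t := 1) ⟨zero_le_one, le_rfl⟩
  have h2 : Γ (f x) 1 = x := hσf x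
  rwa [h2, mul_one] at h1

end Lifting

/-! ### The Hadamard modulus -/

section HadamardModulus

variable {X Y : Type*} [NormedAddCommGroup X] [NormedSpace ℝ X]
  [NormedAddCommGroup Y] [NormedSpace ℝ Y]

/-- `inf_{‖x‖ ≤ ρ} ‖df(x)⁻¹‖⁻¹`, extended to negative `ρ` by its value at `0`, which makes it
nonincreasing on the whole line (the bare `sInf` takes the junk value `0` for `ρ < 0`). -/
def hadamardModulus (f' : X → X ≃L[ℝ] Y) (ρ : ℝ) : ℝ :=
  sInf ((fun x : X => ‖((f' x).symm : Y →L[ℝ] X)‖⁻¹) '' Metric.closedBall 0 (max ρ 0))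

lemma hadamardModulus_bddBelow (f' : X → X ≃L[ℝ] Y) (s : Set X) :
    BddBelow ((fun x : X => ‖((f' x).symm : Y →L[ℝ] X)‖⁻¹) '' s) :=
  ⟨0, by rintro _ ⟨x, -, rfl⟩; positivity⟩

lemma hadamardModulus_nonneg (f' : X → X ≃L[ℝ] Y) (ρ : ℝ) : 0 ≤ hadamardModulus f' ρ :=
  Real.sInf_nonneg (by rintro _ ⟨x, -, rfl⟩; positivity)

lemma hadamardModulus_antitone (f' : X → X ≃L[ℝ] Y) : Antitone (hadamardModulus f') := by
  intro a b hab
  refine csInf_le_csInf (hadamardModulus_bddBelow f' _) ?_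
    (image_mono (Metric.closedBall_subset_closedBall (max_le_max_right 0 hab)))
  exact ⟨_, 0, by simp, rfl⟩

lemma hadamardModulus_le (f' : X → X ≃L[ℝ] Y) (x : X) :
    hadamardModulus f' ‖x‖ ≤ ‖((f' x).symm : Y →L[ℝ] X)‖⁻¹ :=
  csInf_le (hadamardModulus_bddBelow f' _) ⟨x, by simp, rfl⟩

lemma hadamardModulus_mul_le (f' : X → X ≃L[ℝ] Y) (x : X) :
    hadamardModulus f' ‖x‖ * ‖((f' x).symm : Y →L[ℝ] X)‖ ≤ 1 :=
  (mul_le_mul_of_nonneg_right (hadamardModulus_le f' x) (norm_nonneg _)).trans inv_mul_le_one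

end HadamardModulus

/-! ### The Hadamard condition implies the weighted Palais–Smale condition -/

theorem hadamard_implies_weighted_chang_PS {X Y : Type*} [NormedAddCommGroup X] [NormedSpace ℝ X] [CompleteSpace X]
    [NormedAddCommGroup Y] [NormedSpace ℝ Y] [CompleteSpace Y]
    (f : X → Y) (f' : X → X ≃L[ℝ] Y)
    (hC1 : ContDiff ℝ 1 f)
    (hdf : ∀ x : X, HasFDerivAt f (f' x : X →L[ℝ] Y) x)
    (hHad : ∫⁻ ρ in Set.Ioi (0:ℝ),
        ENNReal.ofReal
          (sInf ((fun x : X => ‖((f' x).symm : Y →L[ℝ] X)‖⁻¹) '' Metric.closedBall 0 ρ)) = ⊤) :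
    (∃ h : ℝ → ℝ, ContinuousOn h (Set.Ici 0) ∧ MonotoneOn h (Set.Ici 0) ∧
        (∀ t ∈ Set.Ici (0:ℝ), 0 ≤ h t) ∧
        (∫⁻ ρ in Set.Ioi (0:ℝ), ENNReal.ofReal (1 / (1 + h ρ)) = ⊤) ∧
        ∀ y : Y, WeightedChangPS (fun u => (1/2 : ℝ) * ‖f u - y‖ ^ 2) h) ∧
      NormCoercive f ∧ Function.Bijective f ∧
      ∃ g : Y → X, ContDiff ℝ 1 g ∧ Function.LeftInverse g f ∧ Function.RightInverse g f := by
  set m := hadamardModulus f' with hm_def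
  have hm : Antitone m := hadamardModulus_antitone f'
  have h0 : ∀ r, 0 ≤ m r := hadamardModulus_nonneg f'
  have htop : ∫⁻ r in Set.Ioi (0 : ℝ), ENNReal.ofReal (m r) = ⊤ := by
    rw [← hHad]
    refine MeasureTheory.setLIntegral_congr_fun measurableSet_Ioi fun ρ hρ => ?_
    have hρ : (0 : ℝ) < ρ := hρ
    simp only [hm_def, hadamardModulus, max_eq_left hρ.le]
  have hstrict : ∀ x, HasStrictFDerivAt f (f' x : X →L[ℝ] Y) x := fun x =>
    hC1.contDiffAt.hasStrictFDerivAt' (hdf x) one_ne_zero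
  obtain ⟨⟨e, he⟩, hgrow⟩ := exists_homeomorph hstrict hm h0 htop (hadamardModulus_mul_le f')
  refine ⟨?_, ?_, he ▸ e.bijective, e.symm, ?_, ?_, ?_⟩
  · obtain ⟨h, hcont, hmono, hnonneg, hdiv, hbound⟩ := exists_weight hm h0 htop
    refine ⟨h, hcont, hmono, hnonneg, hdiv, fun y x _ hx => ?_⟩
    have hm0 : 0 < m 0 := pos_of_lintegral_eq_top hm h0 htop 0
    have hle : ∀ n, m 0 * ‖f (x n) - y‖
        ≤ lambdaF (fun u => (1/2 : ℝ) * ‖f u - y‖ ^ 2) (x n) * (1 + h ‖x n‖) := fun n => by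
      have h1 : 0 ≤ 1 + h ‖x n‖ := by linarith [hnonneg ‖x n‖ (norm_nonneg _)]
      calc m 0 * ‖f (x n) - y‖ ≤ m ‖x n‖ * (1 + h ‖x n‖) * ‖f (x n) - y‖ :=
            mul_le_mul_of_nonneg_right (hbound _) (norm_nonneg _)
        _ = m ‖x n‖ * ‖f (x n) - y‖ * (1 + h ‖x n‖) := by ring
        _ ≤ _ := by
          refine mul_le_mul_of_nonneg_right (le_trans ?_ (norm_mul_le_lambdaF (hstrict (x n)) y)) h1
          exact mul_le_mul_of_nonneg_right (hadamardModulus_le f' (x n)) (norm_nonneg _)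
    have hto0 : Tendsto (fun n => m 0 * ‖f (x n) - y‖) atTop (𝓝 0) :=
      squeeze_zero (fun n => by positivity) hle hx
    have hto1 : Tendsto (fun n => ‖f (x n) - y‖) atTop (𝓝 0) := by
      simpa [hm0.ne'] using hto0.const_mul (m 0)⁻¹
    have hto2 : Tendsto (fun n => f (x n)) atTop (𝓝 y) :=
      tendsto_iff_norm_sub_tendsto_zero.2 hto1
    -- `f` is a homeomorphism, so the whole sequence converges to the preimage of `y`.
    refine ⟨e.symm y, id, strictMono_id, ?_⟩
    have := (e.symm.continuous.tendsto y).comp hto2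
    refine this.congr fun n => ?_
    simp [← he]
  · refine tendsto_atTop.2 fun C => ?_
    obtain ⟨R, -, hR⟩ := exists_lt_integral hm h0 htop (C + ‖f 0‖)
    refine eventually_comap.2 ((eventually_ge_atTop R).mono fun r hr x hx => ?_)
    have h1 := monotone_integral hm h0 (hr.trans_eq hx.symm)
    have h2 := hgrow x
    have h3 := norm_sub_le (f x) (f 0)
    simp only at h1
    linarith
  · exact e.contDiff_symm (f₀' := f') (fun a => by rw [he]; exact hdf a) (by rw [he]; exact hC1)
  · intro x
    rw [← he]
    exact e.symm_apply_apply x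
  · intro y
    rw [← he]
    exact e.apply_symm_apply y
end
end

section
/- Let f : ℝⁿ → ℝⁿ be a local C¹-diffeomorphism. Then f is a C¹-diffeomorphism of ℝⁿ onto ℝⁿ if and only if f is norm-coercive and sup_{‖x‖≤ρ} ‖df(x)^{-1}‖ < ∞ for every ρ > 0. -/
/-! The forward direction is compactness: a homeomorphism of `ℝⁿ` preserves the filter of
complements of compact sets, and differentiating `g ∘ f = id` identifies `df(x)⁻¹` with `dg(f x)`,
which is continuous in `x` and hence bounded on closed balls.

Conversely, a norm-coercive continuous map of `ℝⁿ` is proper, and a proper local homeomorphism is a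
covering map (closed map with finite fibres). Since `ℝⁿ` is simply connected, the identity lifts
through `f` to a continuous section `g`; by uniqueness of lifts over a connected space `g ∘ f = id`.
So `f` is a homeomorphism, and the inverse function theorem makes `g` of class `C¹`. -/

open Filter Topology Set

noncomputable section

/-- A covering map from a nonempty connected space to a simply connected, locally path-connected
space is a homeomorphism: the lift of the identity is a global inverse. -/
lemma IsCoveringMap.exists_homeomorph_of_simplyConnected {E X : Type*} [TopologicalSpace E]
    [TopologicalSpace X] [ConnectedSpace E] [SimplyConnectedSpace X] [LocallyPathConnectedSpace X]
    {p : E → X} (hp : IsCoveringMap p) : ∃ h : E ≃ₜ X, ⇑h = p := by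
  obtain ⟨e⟩ : Nonempty E := inferInstance
  obtain ⟨g, ⟨hge, hpg⟩, -⟩ :=
    hp.existsUnique_continuousMap_lifts (ContinuousMap.id X) (p e) e rfl
  have hright : Function.RightInverse g p := fun y => congrFun hpg y
  -- `g ∘ p` and `id` both lift `p` and agree at `e`
  have hleft : ⇑g ∘ p = id :=
    hp.eq_of_comp_eq (g.continuous.comp hp.continuous) continuous_id
      (funext fun x => hright (p x)) e hge
  exact ⟨⟨⟨p, g, congrFun hleft, hright⟩, hp.continuous, g.continuous⟩, rfl⟩

lemma normCoercive_iff_tendsto_cocompact {X Y : Type*} [NormedAddCommGroup X]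
    [NormedAddCommGroup Y] [ProperSpace X] [ProperSpace Y] {f : X → Y} :
    NormCoercive f ↔ Tendsto f (cocompact X) (cocompact Y) := by
  rw [NormCoercive, ← Metric.cobounded_eq_cocompact, ← Metric.cobounded_eq_cocompact,
    comap_norm_atTop, tendsto_norm_atTop_iff_cobounded]

/-- A proper local homeomorphism has finite fibres, being discrete and compact, and is therefore a
covering map. -/
lemma IsProperMap.isCoveringMap_of_isLocalHomeomorph {E X : Type*} [TopologicalSpace E]
    [TopologicalSpace X] [T2Space E] {p : E → X} (hp : IsProperMap p)
    (hloc : IsLocalHomeomorph p) : IsCoveringMap p := by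
  rw [isCoveringMap_iff_isCoveringMapOn_univ]
  refine hp.isClosedMap.isCoveringMapOn_of_isLocalHomeomorphOn (fun x _ => ?_)
    (hloc.isLocalHomeomorphOn)
  refine (hp.isCompact_preimage isCompact_singleton).finite
    (.of_openPartialHomeomorph p subset_rfl fun e _ => ?_)
  obtain ⟨φ, hφ, h⟩ := hloc e
  exact ⟨φ, hφ, h.symm⟩

theorem finite_dim_global_inversion_iff (n : ℕ)
    (f : EuclideanSpace ℝ (Fin n) → EuclideanSpace ℝ (Fin n))
    (hC1 : ContDiff ℝ 1 f)
    (f' : EuclideanSpace ℝ (Fin n) → EuclideanSpace ℝ (Fin n) ≃L[ℝ] EuclideanSpace ℝ (Fin n))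
    (hdf : ∀ x, HasFDerivAt f (f' x : EuclideanSpace ℝ (Fin n) →L[ℝ] EuclideanSpace ℝ (Fin n)) x) :
    (∃ g : EuclideanSpace ℝ (Fin n) → EuclideanSpace ℝ (Fin n),
        ContDiff ℝ 1 g ∧ Function.LeftInverse g f ∧ Function.RightInverse g f) ↔
      (NormCoercive f ∧
        ∀ ρ : ℝ, 0 < ρ → ∃ C : ℝ, ∀ x, ‖x‖ ≤ ρ →
          ‖((f' x).symm : EuclideanSpace ℝ (Fin n) →L[ℝ] EuclideanSpace ℝ (Fin n))‖ ≤ C) := by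
  constructor
  · rintro ⟨g, hg, hleft, hright⟩
    let h : EuclideanSpace ℝ (Fin n) ≃ₜ EuclideanSpace ℝ (Fin n) :=
      ⟨⟨f, g, hleft, hright⟩, hC1.continuous, hg.continuous⟩
    refine ⟨normCoercive_iff_tendsto_cocompact.2 h.isClosedEmbedding.tendsto_cocompact,
      fun ρ _ => ?_⟩
    have hcont : Continuous fun x => fderiv ℝ g (f x) :=
      (hg.continuous_fderiv one_ne_zero).comp hC1.continuous
    obtain ⟨C, hC⟩ := (isCompact_closedBall (0 : EuclideanSpace ℝ (Fin n))
      ρ).exists_bound_of_continuousOn hcont.continuousOn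
    refine ⟨C, fun x hx => ?_⟩
    -- differentiate `g ∘ f = id` at `x`
    have hcomp : HasFDerivAt (g ∘ f) _ x :=
      ((hg.differentiable one_ne_zero) (f x)).hasFDerivAt.comp x (hdf x)
    rw [hleft.comp_eq_id] at hcomp
    have hid := hcomp.unique (hasFDerivAt_id x)
    have hsymm : ((f' x).symm : EuclideanSpace ℝ (Fin n) →L[ℝ] EuclideanSpace ℝ (Fin n)) =
        fderiv ℝ g (f x) := by
      ext1 v
      simpa using (DFunLike.congr_fun hid ((f' x).symm v)).symm
    rw [hsymm]
    exact hC x (by simpa using hx)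
  · rintro ⟨hcoer, -⟩
    have hproper : IsProperMap f := isProperMap_iff_tendsto_cocompact.2
      ⟨hC1.continuous, normCoercive_iff_tendsto_cocompact.1 hcoer⟩
    have hloc : IsLocalHomeomorph f := fun x =>
      ⟨hC1.contDiffAt.toOpenPartialHomeomorph f (hdf x) one_ne_zero,
        hC1.contDiffAt.mem_toOpenPartialHomeomorph_source (hdf x) one_ne_zero, rfl⟩
    obtain ⟨h, rfl⟩ :=
      (hproper.isCoveringMap_of_isLocalHomeomorph hloc).exists_homeomorph_of_simplyConnected
    exact ⟨h.symm, h.contDiff_symm hdf hC1, h.symm_apply_apply, h.apply_symm_apply⟩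
end
end
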